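/- arXiv:quant-ph/0511149 — 5 statements merged into one kernel-verified Lean document; each statement's English description precedes it below -/
import Mathlib

section
/- Let G be a finite group, let (σ_j)_{j∈J} be a complete family of irreducibles for G, let ρ be any unitary representation of G on a finite-dimensional complex inner product space V, and let M ⊆ G be a conjugacy class of involutions with representative m₀. Then for every b ∈ V, (1/|M|) Σ_{m∈M} |⟨b, ρ(m) b⟩|² = Σ_{j∈J} (χ_j(m₀)/d_j) · (d_j/|G|) Σ_{g∈G} conj(χ_j(g)) |⟨b, ρ(g) b⟩|², as an identity of complex numbers (both sides are in fact real). -/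
noncomputable section

open scoped BigOperators InnerProductSpace

def IsUnitaryRep {G V : Type*} [Group G] [NormedAddCommGroup V] [InnerProductSpace ℂ V]
    (ρ : Representation ℂ G V) : Prop :=
  ∀ (g : G) (v w : V), ⟪ρ g v, ρ g w⟫_ℂ = ⟪v, w⟫_ℂ

def IsIrreducibleRep {G V : Type*} [Group G] [AddCommGroup V] [Module ℂ V]
    (ρ : Representation ℂ G V) : Prop :=
  (∃ v : V, v ≠ 0) ∧
    ∀ W : Submodule ℂ V, (∀ (g : G) (v : V), v ∈ W → ρ g v ∈ W) → W = ⊥ ∨ W = ⊤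

def RepIso {G V₁ V₂ : Type*} [Group G] [AddCommGroup V₁] [Module ℂ V₁]
    [AddCommGroup V₂] [Module ℂ V₂]
    (ρ₁ : Representation ℂ G V₁) (ρ₂ : Representation ℂ G V₂) : Prop :=
  ∃ e : V₁ ≃ₗ[ℂ] V₂, ∀ (g : G) (v : V₁), e (ρ₁ g v) = ρ₂ g (e v)

def repChar {G V : Type*} [Group G] [AddCommGroup V] [Module ℂ V]
    (ρ : Representation ℂ G V) (g : G) : ℂ := LinearMap.trace ℂ V (ρ g)

def IsCompleteFamily {G : Type*} [Group G] {J : Type*}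
    (W : J → Type*) [∀ j, NormedAddCommGroup (W j)] [∀ j, InnerProductSpace ℂ (W j)]
    [∀ j, FiniteDimensional ℂ (W j)]
    (σ : ∀ j, Representation ℂ G (W j)) : Prop :=
  (∀ j, IsUnitaryRep (σ j)) ∧ (∀ j, IsIrreducibleRep (σ j)) ∧
    (∀ j j', j ≠ j' → ¬ RepIso (σ j) (σ j')) ∧
    (∀ (U : Type) [AddCommGroup U] [Module ℂ U] [FiniteDimensional ℂ U]
      (τ : Representation ℂ G U), IsIrreducibleRep τ → ∃ j, RepIso τ (σ j))

def isoProj {G V : Type*} [Group G] [Fintype G] [AddCommGroup V] [Module ℂ V]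
    (d : ℕ) (χ : G → ℂ) (ρ : Representation ℂ G V) : V →ₗ[ℂ] V :=
  ((d : ℂ) / (Fintype.card G : ℂ)) • ∑ g : G, starRingEnd ℂ (χ g) • (ρ g : V →ₗ[ℂ] V)

def onI {G : Type*} [One G] {k : ℕ} (g : G) (I : Finset (Fin k)) : Fin k → G :=
  fun i => if i ∈ I then g else 1

def invProj {G V : Type*} [Group G] [AddCommGroup V] [Module ℂ V] {k : ℕ}
    (ρ : Representation ℂ (Fin k → G) V) (m : G) : V →ₗ[ℂ] V :=
  ((2 : ℂ) ^ k)⁻¹ • ∑ I : Finset (Fin k), (ρ (onI m I) : V →ₗ[ℂ] V)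

def isoProjI {G V : Type*} [Group G] [Fintype G] [AddCommGroup V] [Module ℂ V] {k : ℕ}
    (ρ : Representation ℂ (Fin k → G) V) (d : ℕ) (χ : G → ℂ) (I : Finset (Fin k)) :
    V →ₗ[ℂ] V :=
  ((d : ℂ) / (Fintype.card G : ℂ)) • ∑ g : G, starRingEnd ℂ (χ g) • (ρ (onI g I) : V →ₗ[ℂ] V)

open scoped MonoidAlgebra in
lemma aux_simple {G : Type*} [Group G] [Fintype G] {J : Type*}
    (W : J → Type*) [∀ j, NormedAddCommGroup (W j)] [∀ j, InnerProductSpace ℂ (W j)]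
    [∀ j, FiniteDimensional ℂ (W j)]
    (σ : ∀ j, Representation ℂ G (W j)) (hfam : IsCompleteFamily W σ)
    (f : G → ℂ) (hz : ∀ j, ∑ g, f g • (σ j g : W j →ₗ[ℂ] W j) = 0)
    (S : Submodule ℂ[G] ℂ[G]) (hS : IsSimpleModule ℂ[G] S) (s : ℂ[G]) (hs : s ∈ S) :
    (∑ g, f g • (MonoidAlgebra.of ℂ G g)) * s = 0 := by
  classical
  have : Module.Finite ℂ ℂ[G] := Module.Finite.equiv (MonoidAlgebra.coeffLinearEquiv ℂ).symm
  let S' : Submodule ℂ ℂ[G] := S.restrictScalars ℂ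
  let e : S' ≃ₗ[ℂ] (Fin (Module.finrank ℂ S') → ℂ) := (Module.finBasis ℂ S').equivFun
  let π : Representation ℂ G S' :=
    { toFun := fun g =>
        { toFun := fun x => ⟨MonoidAlgebra.of ℂ G g * x.1, S.smul_mem _ x.2⟩
          map_add' := fun x y => by ext1; simp [mul_add]
          map_smul' := fun c x => by ext1; simp }
      map_one' := by
        ext1 x; ext1
        show MonoidAlgebra.of ℂ G 1 * x.1 = x.1
        rw [map_one, one_mul]
      map_mul' := fun g h => by
        ext1 x; ext1
        show MonoidAlgebra.of ℂ G (g * h) * x.1 = MonoidAlgebra.of ℂ G g * (MonoidAlgebra.of ℂ G h * x.1)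
        rw [map_mul, mul_assoc] }
  have hπ : ∀ g (x : S'), ((π g x : S') : ℂ[G]) = MonoidAlgebra.of ℂ G g * x.1 := fun _ _ => rfl
  let τ : Representation ℂ G (Fin (Module.finrank ℂ S') → ℂ) :=
    { toFun := fun g => e.conj (π g)
      map_one' := by rw [map_one]; exact e.conj_id
      map_mul' := fun g h => by rw [map_mul]; exact e.conj_comp _ _ }
  have hτ : ∀ g v, τ g v = e (π g (e.symm v)) := fun _ _ => rfl
  have hirr : IsIrreducibleRep τ := by
    constructor
    · have := hS.nontrivial
      obtain ⟨x, hx⟩ := exists_ne (0 : S)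
      refine ⟨e x, ?_⟩
      intro h
      exact hx ((LinearEquiv.map_eq_zero_iff e).1 h)
    · intro U hU
      let N : Submodule ℂ ℂ[G] := (U.comap e.toLinearMap).map S'.subtype
      have hN : ∀ (a : ℂ[G]) x, x ∈ N → a * x ∈ N := by
        intro a x hx
        induction a using MonoidAlgebra.induction_on with
        | of g =>
          obtain ⟨y, hy, rfl⟩ := hx
          refine ⟨π g y, ?_, rfl⟩
          have := hU g _ hy
          rw [hτ] at this
          simpa using this
        | add a b ha hb => rw [add_mul]; exact N.add_mem ha hb
        | smul c a ha => rw [smul_mul_assoc]; exact N.smul_mem _ ha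
      let N' : Submodule ℂ[G] S :=
        { carrier := {x | e x ∈ U}
          add_mem' := fun {a b} ha hb => by
            have : e (a + b) = e a + e b := map_add e a b
            show e (a + b) ∈ U
            rw [this]; exact U.add_mem ha hb
          zero_mem' := by
            show e (0 : S') ∈ U
            rw [map_zero]; exact U.zero_mem
          smul_mem' := fun c x hx => by
            have h1 := hN c x.1 ⟨x, hx, rfl⟩
            obtain ⟨y, hy, h2⟩ := h1
            have : (c • x : S) = y := Subtype.ext h2.symm
            show e (c • x : S) ∈ U
            rw [this]; exact hy }
      have hmem : ∀ x : S, x ∈ N' ↔ e x ∈ U := fun _ => Iff.rfl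
      rcases eq_bot_or_eq_top N' with h | h
      · left
        rw [eq_bot_iff]
        intro v hv
        have : (e.symm v : S) ∈ N' := by
          refine (hmem _).2 ?_
          have h4 := e.apply_symm_apply v
          exact h4.symm ▸ hv
        rw [h] at this
        have h3 : e.symm v = 0 := this
        simpa using h3
      · right
        rw [eq_top_iff]
        intro v _
        have : (e.symm v : S) ∈ N' := by rw [h]; trivial
        have h5 := (hmem _).1 this
        have h4 := e.apply_symm_apply v
        exact h4 ▸ h5
  obtain ⟨j, E, hE⟩ := hfam.2.2.2 _ τ hirr
  have key : ∑ g, f g • π g ⟨s, hs⟩ = 0 := by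
    apply e.injective
    apply E.injective
    have h2 : ∀ g, E (e (π g ⟨s, hs⟩)) = σ j g (E (e ⟨s, hs⟩)) := by
      intro g
      rw [← hE, hτ, LinearEquiv.symm_apply_apply]
    have := congrArg (fun T => T (E (e ⟨s, hs⟩))) (hz j)
    simp only [LinearMap.sum_apply, LinearMap.smul_apply, LinearMap.zero_apply] at this
    simp only [map_sum, map_smul, h2, map_zero]
    exact this
  have := congrArg (Subtype.val) key
  rw [Finset.sum_mul]
  simp only [smul_mul_assoc, ← hπ _ ⟨s, hs⟩]
  simpa [← hπ _ ⟨s, hs⟩] using this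

open scoped MonoidAlgebra in
lemma aux_complete {G : Type*} [Group G] [Fintype G] {J : Type*}
    (W : J → Type*) [∀ j, NormedAddCommGroup (W j)] [∀ j, InnerProductSpace ℂ (W j)]
    [∀ j, FiniteDimensional ℂ (W j)]
    (σ : ∀ j, Representation ℂ G (W j)) (hfam : IsCompleteFamily W σ)
    (f : G → ℂ) (hf : ∀ g h, f (h * g * h⁻¹) = f g)
    (ho : ∀ j, ∑ g, f g * repChar (σ j) g = 0) : f = 0 := by
  classical
  have hz : ∀ j, ∑ g, f g • (σ j g : W j →ₗ[ℂ] W j) = 0 := by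
    intro j
    set T : W j →ₗ[ℂ] W j := ∑ g, f g • (σ j g : W j →ₗ[ℂ] W j) with hT
    have hcomm : ∀ h v, T (σ j h v) = σ j h (T v) := by
      intro h v
      simp only [hT, LinearMap.sum_apply, LinearMap.smul_apply, map_sum, map_smul]
      rw [← Equiv.sum_comp (MulAut.conj h).toEquiv]
      refine Finset.sum_congr rfl fun g _ => ?_
      simp only [MulEquiv.toEquiv_eq_coe, EquivLike.coe_coe, MulAut.conj_apply, hf]
      rw [← Module.End.mul_apply, ← Module.End.mul_apply, ← map_mul, ← map_mul]
      simp
    obtain ⟨⟨v, hv⟩, hirr⟩ := hfam.2.1 j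
    have : Nontrivial (W j) := ⟨v, 0, hv⟩
    obtain ⟨μ, hμ⟩ := Module.End.exists_eigenvalue T
    have htop : Module.End.eigenspace T μ = ⊤ := by
      refine (hirr (Module.End.eigenspace T μ) ?_).resolve_left hμ
      intro g w hw
      rw [Module.End.mem_eigenspace_iff] at hw ⊢
      rw [hcomm, hw, map_smul]
    have hTs : T = μ • (1 : W j →ₗ[ℂ] W j) := by
      ext w
      have : w ∈ Module.End.eigenspace T μ := by rw [htop]; trivial
      rw [Module.End.mem_eigenspace_iff] at this
      simpa using this
    have htr : LinearMap.trace ℂ (W j) T = 0 := by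
      rw [hT]
      simpa [repChar] using ho j
    rw [hTs, map_smul, LinearMap.trace_one, smul_eq_mul, mul_eq_zero] at htr
    have : (Module.finrank ℂ (W j) : ℂ) ≠ 0 := by
      exact_mod_cast Module.finrank_pos.ne'
    rw [hTs, htr.resolve_right this, zero_smul]
  set z : ℂ[G] := ∑ g, f g • (MonoidAlgebra.of ℂ G g) with hzdef
  have hzs := aux_simple W σ hfam f hz
  rw [← hzdef] at hzs
  have hcard : NeZero (Nat.card G : ℂ) := ⟨by simp [Nat.card_eq_fintype_card]⟩
  have hcomm : ∀ a : ℂ[G], z * a = a * z := by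
    intro a
    induction a using MonoidAlgebra.induction_on with
    | of h =>
      rw [hzdef, Finset.sum_mul, Finset.mul_sum, ← Equiv.sum_comp (MulAut.conj h).toEquiv]
      refine Finset.sum_congr rfl fun g _ => ?_
      simp only [MulEquiv.toEquiv_eq_coe, EquivLike.coe_coe, MulAut.conj_apply, hf]
      rw [smul_mul_assoc, mul_smul_comm, ← map_mul, ← map_mul]
      simp
    | add a b ha hb => rw [mul_add, add_mul, ha, hb]
    | smul c a ha => rw [smul_mul_assoc, mul_smul_comm, ha]
  let K : Submodule ℂ[G] ℂ[G] :=
    { carrier := {x | z * x = 0}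
      add_mem' := fun {a b} (ha : z * a = 0) (hb : z * b = 0) => by
        show z * (a + b) = 0
        rw [mul_add, ha, hb, add_zero]
      zero_mem' := mul_zero _
      smul_mem' := fun c x (hx : z * x = 0) => by
        show z * (c * x) = 0
        rw [← mul_assoc, hcomm, mul_assoc, hx, mul_zero] }
  have hK : K = ⊤ := by
    rw [eq_top_iff, ← IsSemisimpleModule.sSup_simples_eq_top ℂ[G] ℂ[G]]
    exact sSup_le fun S hS x hx => hzs S hS x hx
  have h1 : (1 : ℂ[G]) ∈ K := by rw [hK]; trivial
  have h2 : z = 0 := by rw [← mul_one z]; exact h1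
  funext g
  have h3 : MonoidAlgebra.coeffLinearEquiv ℂ z g = 0 := by rw [h2]; simp
  rw [hzdef, map_sum, Finsupp.finset_sum_apply] at h3
  simpa [Finsupp.single_apply] using h3

lemma aux_conj {G V : Type*} [Group G] [NormedAddCommGroup V] [InnerProductSpace ℂ V]
    [FiniteDimensional ℂ V] (ρ : Representation ℂ G V) (h : IsUnitaryRep ρ) (g : G) :
    repChar ρ g⁻¹ = starRingEnd ℂ (repChar ρ g) := by
  unfold repChar
  rw [LinearMap.trace_eq_sum_inner _ (stdOrthonormalBasis ℂ V),
    LinearMap.trace_eq_sum_inner _ (stdOrthonormalBasis ℂ V), map_sum]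
  refine Finset.sum_congr rfl fun i _ => ?_
  rw [inner_conj_symm, ← h g, ← Module.End.mul_apply, ← map_mul]
  simp

lemma aux_irr {G V : Type*} [Group G] [AddCommGroup V] [Module ℂ V]
    (ρ : Representation ℂ G V) (h : IsIrreducibleRep ρ) : ρ.IsIrreducible := by
  obtain ⟨⟨v, hv⟩, hirr⟩ := h
  refine { exists_pair_ne := ⟨⊥, ⊤, ?_⟩, eq_bot_or_eq_top := ?_ }
  · intro h
    have : v ∈ (⊤ : Subrepresentation ρ) := trivial
    rw [← h] at this
    exact hv this
  · intro a
    rcases hirr a.toSubmodule (fun g v hv => a.apply_mem_toSubmodule g hv) with h | h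
    · left; exact Subrepresentation.toSubmodule_injective h
    · right; exact Subrepresentation.toSubmodule_injective h

open scoped Classical in
lemma aux_orth {G : Type*} [Group G] [Fintype G] {J : Type*}
    (W : J → Type*) [∀ j, NormedAddCommGroup (W j)] [∀ j, InnerProductSpace ℂ (W j)]
    [∀ j, FiniteDimensional ℂ (W j)]
    (σ : ∀ j, Representation ℂ G (W j)) (hfam : IsCompleteFamily W σ) (i j : J) :
    ∑ g, starRingEnd ℂ (repChar (σ i) g) * repChar (σ j) g =
      if i = j then (Fintype.card G : ℂ) else 0 := by
  have := aux_irr _ (hfam.2.1 i)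
  have := aux_irr _ (hfam.2.1 j)
  have hc : (Nat.card G : ℂ) ≠ 0 := by simp [Nat.card_eq_fintype_card]
  have : Invertible (Nat.card G : ℂ) := invertibleOfNonzero hc
  have h := Representation.char_orthonormal (σ j) (σ i)
  have h2 : ∑ g, starRingEnd ℂ (repChar (σ i) g) * repChar (σ j) g
      = ∑ g : G, (σ j).character g * (σ i).character g⁻¹ := by
    refine Finset.sum_congr rfl fun g _ => ?_
    rw [← aux_conj _ (hfam.1 i), mul_comm]
    rfl
  have h3 : Nonempty (Representation.Equiv (σ i) (σ j)) ↔ i = j := by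
    constructor
    · rintro ⟨φ⟩
      by_contra hne
      refine hfam.2.2.1 i j hne ⟨φ.toLinearEquiv, fun g v => ?_⟩
      exact LinearMap.congr_fun (φ.isIntertwining' g) v
    · rintro rfl
      exact ⟨.refl _⟩
  rw [h2, ← Nat.card_eq_fintype_card]
  rw [inv_mul_eq_iff_eq_mul₀ hc] at h
  rw [h]
  simp only [h3]
  split_ifs <;> simp

/-- Second-moment identity: the average over `m ∈ M` of `|⟪b, ρ m b⟫|²` equals
`Σ_j (χ_j(m₀)/d_j) · (d_j/|G|) Σ_g conj(χ_j(g)) |⟪b, ρ g b⟫|²`. -/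
theorem stmt2 {G : Type*} [Group G] [Fintype G]
    {J : Type*} [Fintype J]
    (W : J → Type*) [∀ j, NormedAddCommGroup (W j)] [∀ j, InnerProductSpace ℂ (W j)]
    [∀ j, FiniteDimensional ℂ (W j)]
    (σ : ∀ j, Representation ℂ G (W j)) (hfam : IsCompleteFamily W σ)
    {V : Type*} [NormedAddCommGroup V] [InnerProductSpace ℂ V] [FiniteDimensional ℂ V]
    (ρ : Representation ℂ G V) (hρu : IsUnitaryRep ρ)
    (M : Finset G) (m₀ : G) (hm₀M : m₀ ∈ M)
    (hM : ∀ m : G, m ∈ M ↔ IsConj m₀ m)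
    (hinv : ∀ m ∈ M, m * m = 1 ∧ m ≠ 1)
    (b : V) :
    (1 / (M.card : ℂ)) * ∑ m ∈ M, (‖⟪b, ρ m b⟫_ℂ‖ : ℂ) ^ 2
      = ∑ j, repChar (σ j) m₀ / (Module.finrank ℂ (W j) : ℂ) *
          ((Module.finrank ℂ (W j) : ℂ) / (Fintype.card G : ℂ) *
            ∑ g : G, starRingEnd ℂ (repChar (σ j) g) * (‖⟪b, ρ g b⟫_ℂ‖ : ℂ) ^ 2) := by
  classical
  have hGc : (Fintype.card G : ℂ) ≠ 0 := by simp
  have hMc : (M.card : ℂ) ≠ 0 := by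
    exact_mod_cast (Finset.card_pos.2 ⟨m₀, hm₀M⟩).ne'
  have hcc : ∀ j g h, repChar (σ j) (h * g * h⁻¹) = repChar (σ j) g := fun j g h =>
    Representation.char_conj (σ j) g h
  have hcM : ∀ j, ∀ m ∈ M, repChar (σ j) m = repChar (σ j) m₀ := by
    intro j m hm
    obtain ⟨c, rfl⟩ := isConj_iff.1 ((hM m).1 hm)
    exact hcc _ _ _
  have hf := aux_complete W σ hfam
    (fun g => (if g ∈ M then (1 : ℂ) else 0) - ∑ j, (M.card : ℂ) / (Fintype.card G : ℂ) *
      repChar (σ j) m₀ * starRingEnd ℂ (repChar (σ j) g))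
    (by
      intro g h
      have : h * g * h⁻¹ ∈ M ↔ g ∈ M := by
        rw [hM, hM]
        have hc : IsConj g (h * g * h⁻¹) := isConj_iff.2 ⟨h, rfl⟩
        exact ⟨fun k => k.trans hc.symm, fun k => k.trans hc⟩
      simp only [this, hcc])
    (by
      intro j
      simp only [sub_mul, Finset.sum_sub_distrib, Finset.sum_mul]
      rw [Finset.sum_comm]
      simp only [mul_assoc, ← Finset.mul_sum, aux_orth W σ hfam]
      simp only [ite_mul, one_mul, zero_mul, Finset.sum_ite_mem, Finset.univ_inter]
      rw [Finset.sum_congr rfl (hcM j)]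
      simp
      field_simp
      simp)
  have hf' : ∀ g, (if g ∈ M then (1 : ℂ) else 0) = ∑ j, (M.card : ℂ) / (Fintype.card G : ℂ) *
      repChar (σ j) m₀ * starRingEnd ℂ (repChar (σ j) g) := fun g =>
    sub_eq_zero.1 (congrFun hf g)
  have hL : ∑ m ∈ M, (‖⟪b, ρ m b⟫_ℂ‖ : ℂ) ^ 2
      = ∑ g, (if g ∈ M then (1 : ℂ) else 0) * (‖⟪b, ρ g b⟫_ℂ‖ : ℂ) ^ 2 := by
    simp only [ite_mul, one_mul, zero_mul, Finset.sum_ite_mem, Finset.univ_inter]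
  rw [hL]
  simp only [hf', Finset.sum_mul]
  rw [Finset.sum_comm, Finset.mul_sum]
  refine Finset.sum_congr rfl fun j _ => ?_
  have hd : (Module.finrank ℂ (W j) : ℂ) ≠ 0 := by
    obtain ⟨⟨v, hv⟩, -⟩ := hfam.2.1 j
    haveI : Nontrivial (W j) := ⟨v, 0, hv⟩
    exact_mod_cast Module.finrank_pos.ne'
  simp only [mul_assoc, ← Finset.mul_sum]
  field_simp
end
end

section
/- Let G be a finite group, let ρ be an irreducible unitary representation of G on a finite-dimensional complex inner product space V with dimension d_ρ and character χ_ρ, and let M ⊆ G be a conjugacy class of involutions with representative m₀ (so χ_ρ(m₀) is a real number). Then for every b ∈ V, (1/|M|) Σ_{m∈M} ‖(1/2)(b + ρ(m) b)‖² = (1/2)·‖b‖²·(1 + χ_ρ(m₀)/d_ρ). -/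
noncomputable section

open scoped BigOperators InnerProductSpace

/-- For an irreducible unitary representation `ρ` and a conjugacy class `M` of
involutions, the average over `m ∈ M` of `‖(1/2)(b + ρ m b)‖²` equals
`(1/2)‖b‖²(1 + χ_ρ(m₀)/d_ρ)`. -/
theorem stmt3 {G : Type*} [Group G] [Fintype G]
    {V : Type*} [NormedAddCommGroup V] [InnerProductSpace ℂ V] [FiniteDimensional ℂ V]
    (ρ : Representation ℂ G V) (hρu : IsUnitaryRep ρ) (hρi : IsIrreducibleRep ρ)
    (M : Finset G) (m₀ : G) (hm₀M : m₀ ∈ M)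
    (hM : ∀ m : G, m ∈ M ↔ IsConj m₀ m)
    (hinv : ∀ m ∈ M, m * m = 1 ∧ m ≠ 1)
    (b : V) :
    (1 / (M.card : ℂ)) * ∑ m ∈ M, (‖(1/2 : ℂ) • (b + ρ m b)‖ : ℂ) ^ 2
      = 1/2 * (‖b‖ : ℂ) ^ 2 * (1 + repChar ρ m₀ / (Module.finrank ℂ V : ℂ)) := by
  classical
  obtain ⟨⟨v₀, hv₀⟩, hirr⟩ := hρi
  have : Nontrivial V := ⟨v₀, 0, hv₀⟩
  set T : Module.End ℂ V := ∑ m ∈ M, ρ m with hT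
  have hTapp : ∀ v, T v = ∑ m ∈ M, ρ m v := fun v => by simp [hT, LinearMap.sum_apply]
  have hcomm : ∀ (g : G) (v : V), T (ρ g v) = ρ g (T v) := by
    intro g v
    rw [hTapp, hTapp, map_sum]
    symm
    refine Finset.sum_bij (fun m _ => g * m * g⁻¹) ?_ ?_ ?_ ?_
    · intro m hm
      rw [hM] at hm ⊢
      exact hm.trans (isConj_iff.2 ⟨g, rfl⟩)
    · intro a _ c _ h
      simpa using h
    · intro m hm
      refine ⟨g⁻¹ * m * g, ?_, by group⟩
      rw [hM] at hm ⊢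
      exact hm.trans (isConj_iff.2 ⟨g⁻¹, by simp⟩)
    · intro m _
      rw [← Module.End.mul_apply, ← Module.End.mul_apply, ← map_mul, ← map_mul]
      congr 2
      group
  obtain ⟨c, hc⟩ := Module.End.exists_eigenvalue T
  have htop : Module.End.eigenspace T c = ⊤ := by
    refine (hirr (Module.End.eigenspace T c) ?_).resolve_left hc
    intro g v hv
    rw [Module.End.mem_eigenspace_iff] at hv ⊢
    rw [hcomm, hv, map_smul]
  have hTc : ∀ v, T v = c • v := fun v =>
    Module.End.mem_eigenspace_iff.1 (htop ▸ Submodule.mem_top)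
  have htr1 : LinearMap.trace ℂ V T = c * (Module.finrank ℂ V : ℂ) := by
    have : T = c • (1 : Module.End ℂ V) := by
      ext v
      simp [hTc]
    rw [this, map_smul, LinearMap.trace_one, smul_eq_mul]
  have htr2 : LinearMap.trace ℂ V T = (M.card : ℂ) * repChar ρ m₀ := by
    rw [hT, map_sum, Finset.sum_congr rfl (g := fun _ => repChar ρ m₀), Finset.sum_const,
      nsmul_eq_mul]
    intro m hm
    obtain ⟨g, hg⟩ := isConj_iff.1 ((hM m).1 hm)
    rw [← hg, map_mul, LinearMap.trace_mul_comm, ← map_mul, repChar]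
    congr 2
    group
  have hd : (Module.finrank ℂ V : ℂ) ≠ 0 := by
    exact_mod_cast (Module.finrank_pos (R := ℂ) (M := V)).ne'
  have hcard : (M.card : ℂ) ≠ 0 := by
    exact_mod_cast (Finset.card_pos.2 ⟨m₀, hm₀M⟩).ne'
  have hterm : ∀ m ∈ M, (‖(1/2 : ℂ) • (b + ρ m b)‖ : ℂ) ^ 2
      = 1/2 * (‖b‖ : ℂ) ^ 2 + 1/2 * ⟪b, ρ m b⟫_ℂ := by
    intro m hm
    have hmm : ρ m (ρ m b) = b := by
      rw [← Module.End.mul_apply, ← map_mul, (hinv m hm).1]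
      simp
    have h1 : ⟪ρ m b, b⟫_ℂ = ⟪b, ρ m b⟫_ℂ := by
      rw [← hρu m (ρ m b) b, hmm]
    have h2 := inner_self_eq_norm_sq_to_K (𝕜 := ℂ) ((1/2 : ℂ) • (b + ρ m b))
    have h3 := inner_self_eq_norm_sq_to_K (𝕜 := ℂ) b
    simp only [Complex.coe_algebraMap] at h2 h3
    rw [← h2, ← h3, inner_smul_left, inner_smul_right, inner_add_left, inner_add_right,
      inner_add_right, h1, hρu]
    have h4 : (starRingEnd ℂ) (1/2 : ℂ) = 1/2 := by
      rw [map_div₀, map_one, map_ofNat]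
    rw [h4]
    ring
  have hb : ∑ m ∈ M, ⟪b, ρ m b⟫_ℂ = c * (‖b‖ : ℂ) ^ 2 := by
    have h3 := inner_self_eq_norm_sq_to_K (𝕜 := ℂ) b
    simp only [Complex.coe_algebraMap] at h3
    rw [← inner_sum, ← hTapp, hTc, inner_smul_right, h3]
  rw [Finset.sum_congr rfl hterm, Finset.sum_add_distrib, ← Finset.mul_sum, ← Finset.mul_sum, hb,
    Finset.sum_const, nsmul_eq_mul]
  have hχ : repChar ρ m₀ = c * (Module.finrank ℂ V : ℂ) / (M.card : ℂ) := by
    rw [eq_div_iff hcard, ← htr1, htr2, mul_comm]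
  rw [hχ]
  field_simp
end
end

section
/- Let G be a finite group, let (σ_j)_{j∈J} be a complete family of irreducibles for G, let ρ be an irreducible unitary representation of G on a finite-dimensional complex inner product space V, and let M ⊆ G be a conjugacy class of involutions with representative m₀. For b ∈ V let X(m) = ‖(1/2)(b + ρ(m) b)‖² (a real number). Then Var_{m∈M} X ≤ (1/4) Σ_{j∈J} (χ_j(m₀)/d_j) · s_j(b), where s_j(b) = (d_j/|G|) Σ_{g∈G} conj(χ_j(g)) |⟨b, ρ(g) b⟩|²; here each s_j(b) is a nonnegative real number and each χ_j(m₀) is real, so the right-hand side is real. -/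
noncomputable section

open scoped BigOperators InnerProductSpace

open scoped ComplexOrder

lemma irr_of {G V : Type*} [Group G] [AddCommGroup V] [Module ℂ V]
    {ρ : Representation ℂ G V} (h : IsIrreducibleRep ρ) : Representation.IsIrreducible ρ := by
  obtain ⟨⟨v, hv⟩, h2⟩ := h
  refine { exists_pair_ne := ⟨⊥, ⊤, fun e => hv ?_⟩, eq_bot_or_eq_top := fun p => ?_ }
  · have : v ∈ (⊤ : Subrepresentation ρ).toSubmodule := Submodule.mem_top
    rw [← e] at this
    exact (Submodule.mem_bot ℂ).1 this
  · rcases h2 p.toSubmodule (fun g v hv => p.apply_mem_toSubmodule g hv) with h | h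
    · exact Or.inl (Subrepresentation.toSubmodule_injective h)
    · exact Or.inr (Subrepresentation.toSubmodule_injective h)

lemma char_inv_conj {G V : Type*} [Group G] [NormedAddCommGroup V] [InnerProductSpace ℂ V]
    [FiniteDimensional ℂ V] {ρ : Representation ℂ G V} (h : IsUnitaryRep ρ) (g : G) :
    starRingEnd ℂ (repChar ρ g) = ρ.character g⁻¹ := by
  unfold repChar Representation.character
  rw [LinearMap.trace_eq_sum_inner _ (stdOrthonormalBasis ℂ V),
    LinearMap.trace_eq_sum_inner _ (stdOrthonormalBasis ℂ V), map_sum]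
  refine Finset.sum_congr rfl fun i _ => ?_
  rw [inner_conj_symm, ← h g _ (ρ g⁻¹ _)]
  simp

lemma schur_zero {G V : Type*} [Group G] [Fintype G] [AddCommGroup V] [Module ℂ V]
    [FiniteDimensional ℂ V] {ρ : Representation ℂ G V} (h : IsIrreducibleRep ρ)
    (φ : G → ℂ) (hφ : ∀ g x, φ (x * g * x⁻¹) = φ g)
    (h0 : ∑ g, φ g * ρ.character g = 0) : ∑ g, φ g • ρ g = 0 := by
  have := irr_of h
  let f : Representation.IntertwiningMap ρ ρ :=
    LinearMap.intertwiningMap_of_isIntertwiningMap ρ ρ (∑ g, φ g • ρ g) (by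
      intro x v
      simp only [LinearMap.sum_apply, LinearMap.smul_apply, map_sum, map_smul]
      rw [← (MulAut.conj x).toEquiv.sum_comp]
      refine Finset.sum_congr rfl fun g _ => ?_
      simp only [MulEquiv.toEquiv_eq_coe, EquivLike.coe_coe, MulAut.conj_apply, hφ]
      rw [← Module.End.mul_apply, ← Module.End.mul_apply, ← map_mul, ← map_mul]
      simp)
  obtain ⟨c, hc⟩ := (Representation.IsIrreducible.algebraMap_intertwiningMap_bijective_of_isAlgClosed (ρ := ρ)).2 f
  have hA : (∑ g, φ g • ρ g) = c • (1 : V →ₗ[ℂ] V) := by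
    ext v
    have := congrArg (fun F : Representation.IntertwiningMap ρ ρ => F v) hc
    exact this.symm
  have ht := congrArg (LinearMap.trace ℂ V) hA
  simp only [map_sum, map_smul, smul_eq_mul, LinearMap.trace_one] at ht
  have : c * (Module.finrank ℂ V : ℂ) = 0 := by rw [← ht, ← h0]; rfl
  have hn : (Module.finrank ℂ V : ℂ) ≠ 0 := by
    obtain ⟨⟨v, hv⟩, _⟩ := h
    have : Nontrivial V := ⟨v, 0, hv⟩
    exact_mod_cast Module.finrank_pos.ne'
  rw [hA, (mul_eq_zero.1 this).resolve_right hn, zero_smul]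

lemma kill_simple {G : Type*} [Group G] [Fintype G]
    {J : Type*}
    (W : J → Type*) [∀ j, NormedAddCommGroup (W j)] [∀ j, InnerProductSpace ℂ (W j)]
    [∀ j, FiniteDimensional ℂ (W j)]
    (σ : ∀ j, Representation ℂ G (W j)) (hfam : IsCompleteFamily W σ)
    (φ : G → ℂ) (h : ∀ j, ∑ g, φ g • σ j g = 0)
    (Q : Type*) [AddCommGroup Q] [Module ℂ Q] [Module (MonoidAlgebra ℂ G) Q]
    [IsScalarTower ℂ (MonoidAlgebra ℂ G) Q] [IsSimpleModule (MonoidAlgebra ℂ G) Q]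
    [Module.Finite ℂ Q] (q : Q) :
    (∑ g, MonoidAlgebra.single g (φ g) : MonoidAlgebra ℂ G) • q = 0 := by
  have : Nontrivial Q := IsSimpleModule.nontrivial (MonoidAlgebra ℂ G) _
  let π : Representation ℂ G (Q) := Representation.ofModule' (Q)
  have hπ : ∀ g (x : Q), π g x = (MonoidAlgebra.single g (1:ℂ) : MonoidAlgebra ℂ G) • x := fun g x => by
    simp [π, Representation.ofModule']
  let e : (Q) ≃ₗ[ℂ] (Fin (Module.finrank ℂ (Q)) → ℂ) :=
    LinearEquiv.ofFinrankEq _ _ (by simp)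
  let τ : Representation ℂ G (Fin (Module.finrank ℂ (Q)) → ℂ) :=
    (e.conjAlgEquiv ℂ : _ →* _).comp π
  have hτ : ∀ g x, τ g (e x) = e (π g x) := fun g x => by
    simp [τ, LinearEquiv.conjAlgEquiv]
  have hirr : IsIrreducibleRep τ := by
    refine ⟨?_, fun U hU => ?_⟩
    · obtain ⟨x, hx⟩ := exists_ne (0 : Q)
      exact ⟨e x, by simpa using hx⟩
    · let P : Submodule (MonoidAlgebra ℂ G) (Q) :=
        { carrier := {x | e x ∈ U}
          add_mem' := fun {x y} hx hy => by
            simp only [Set.mem_ofPred_eq, map_add] at *; exact U.add_mem hx hy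
          zero_mem' := by simp
          smul_mem' := fun c x hx => by
            simp only [Set.mem_ofPred_eq] at *
            induction c using MonoidAlgebra.induction_on with
            | of g =>
              have := hU g _ hx
              rw [hτ, hπ] at this
              exact this
            | add a b ha hb => rw [add_smul, map_add]; exact U.add_mem ha hb
            | smul r a ha => rw [smul_assoc, map_smul]; exact U.smul_mem _ ha }
      rcases eq_bot_or_eq_top P with hP | hP
      · left
        rw [eq_bot_iff]
        intro y hy
        have : e.symm y ∈ P := by show e (e.symm y) ∈ U; simpa using hy
        rw [hP] at this
        simpa using this
      · right
        rw [eq_top_iff]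
        intro y _
        have : e.symm y ∈ P := by rw [hP]; trivial
        have : e (e.symm y) ∈ U := this
        simpa using this
  obtain ⟨j, f, hf⟩ := hfam.2.2.2 _ τ hirr
  have key : ∑ g, φ g • π g = 0 := by
    refine LinearMap.ext fun x => ?_
    apply e.injective
    apply f.injective
    have := congrArg (fun F : W j →ₗ[ℂ] W j => F (f (e x))) (h j)
    simpa [← hf, hτ, LinearMap.sum_apply] using this
  have := congrArg (fun F : Q →ₗ[ℂ] Q => F q) key
  simp only [LinearMap.sum_apply, LinearMap.smul_apply, hπ, LinearMap.zero_apply] at this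
  rw [← this, Finset.sum_smul]
  refine Finset.sum_congr rfl fun g _ => ?_
  rw [← smul_assoc]
  simp

lemma kill_all {G : Type*} [Group G] [Fintype G]
    {J : Type*}
    (W : J → Type*) [∀ j, NormedAddCommGroup (W j)] [∀ j, InnerProductSpace ℂ (W j)]
    [∀ j, FiniteDimensional ℂ (W j)]
    (σ : ∀ j, Representation ℂ G (W j)) (hfam : IsCompleteFamily W σ)
    (φ : G → ℂ) (h : ∀ j, ∑ g, φ g • σ j g = 0) : φ = 0 := by
  have ha : (∑ g, MonoidAlgebra.single g (φ g) : MonoidAlgebra ℂ G) ∈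
      Ring.jacobson (MonoidAlgebra ℂ G) := by
    refine (Submodule.mem_sInf).2 fun I (hI : IsCoatom I) => ?_
    have : IsSimpleModule (MonoidAlgebra ℂ G) (MonoidAlgebra ℂ G ⧸ I) :=
      isSimpleModule_iff_isCoatom.2 hI
    have : Module.Finite ℂ (MonoidAlgebra ℂ G ⧸ I) :=
      Module.Finite.of_surjective (I.mkQ.restrictScalars ℂ) I.mkQ_surjective
    have := kill_simple W σ hfam φ h (MonoidAlgebra ℂ G ⧸ I) (I.mkQ 1)
    rw [← map_smul, smul_eq_mul, mul_one] at this
    exact (Submodule.Quotient.mk_eq_zero I).1 this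
  rw [IsSemisimpleRing.jacobson_eq_bot] at ha
  have ha0 := (Submodule.mem_bot _).1 ha
  ext g
  have := congrArg (fun x : MonoidAlgebra ℂ G => x.coeff g) ha0
  classical
  simpa [MonoidAlgebra.coeff_sum, Finsupp.single_apply] using this

lemma second_orth {G : Type*} [Group G] [Fintype G]
    {J : Type*} [Fintype J]
    (W : J → Type*) [∀ j, NormedAddCommGroup (W j)] [∀ j, InnerProductSpace ℂ (W j)]
    [∀ j, FiniteDimensional ℂ (W j)]
    (σ : ∀ j, Representation ℂ G (W j)) (hfam : IsCompleteFamily W σ)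
    (M : Finset G) (m₀ : G) (hm₀M : m₀ ∈ M)
    (hM : ∀ m : G, m ∈ M ↔ IsConj m₀ m) [DecidableEq G] (g : G) :
    ∑ j, repChar (σ j) m₀ * starRingEnd ℂ (repChar (σ j) g)
      = if g ∈ M then (Fintype.card G : ℂ) / M.card else 0 := by
  let φ : G → ℂ := fun g => ∑ j, repChar (σ j) m₀ * starRingEnd ℂ (repChar (σ j) g)
      - if g ∈ M then (Fintype.card G : ℂ) / M.card else 0
  classical
  have hMc : (M.card : ℂ) ≠ 0 := by
    exact_mod_cast (Finset.card_pos.2 ⟨m₀, hm₀M⟩).ne'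
  have hGc : (Fintype.card G : ℂ) ≠ 0 := by exact_mod_cast Fintype.card_ne_zero
  suffices φ = 0 from sub_eq_zero.1 (congrFun this g)
  refine kill_all W σ hfam φ fun k => schur_zero (hfam.2.1 k) φ (fun g x => ?_) ?_
  · have h1 : x * g * x⁻¹ ∈ M ↔ g ∈ M := by
      have : IsConj g (x * g * x⁻¹) := isConj_iff.2 ⟨x, rfl⟩
      rw [hM, hM]
      exact ⟨fun h => h.trans this.symm, fun h => h.trans this⟩
    have h2 : ∀ j, repChar (σ j) (x * g * x⁻¹) = repChar (σ j) g :=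
      fun j => (σ j).char_conj g x
    simp only [φ, h1, h2]
  · have : Invertible (Nat.card G : ℂ) := invertibleOfNonzero (by simpa using hGc)
    have ho : ∀ j, ∑ g, starRingEnd ℂ (repChar (σ j) g) * (σ k).character g
        = if j = k then (Fintype.card G : ℂ) else 0 := by
      classical
      intro j
      have := irr_of (hfam.2.1 k)
      have := irr_of (hfam.2.1 j)
      have := Representation.char_orthonormal (σ k) (σ j)
      rw [inv_mul_eq_iff_eq_mul₀ (by simpa using hGc)] at this
      have h3 : Nonempty (Representation.Equiv (σ j) (σ k)) ↔ j = k := by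
        constructor
        · rintro ⟨e⟩
          by_contra hne
          refine hfam.2.2.1 j k hne ⟨e.toLinearEquiv, fun g v => ?_⟩
          exact LinearMap.congr_fun (e.isIntertwining' g) v
        · rintro rfl
          exact ⟨Representation.Equiv.refl _⟩
      simp only [char_inv_conj (hfam.1 j), mul_comm _ ((σ k).character _)]
      rw [this]
      simp [h3]
    have hcl : ∀ m ∈ M, (σ k).character m = repChar (σ k) m₀ := by
      intro m hm
      obtain ⟨c, rfl⟩ := isConj_iff.1 ((hM m).1 hm)
      exact (σ k).char_conj m₀ c
    simp only [φ, sub_mul, Finset.sum_sub_distrib, Finset.sum_mul, mul_assoc]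
    rw [Finset.sum_comm]
    simp only [← Finset.mul_sum, ho]
    simp only [mul_ite, mul_zero, Finset.sum_ite_eq', Finset.mem_univ, if_true, ite_mul, zero_mul,
      Finset.sum_ite_mem, Finset.univ_inter]
    rw [Finset.sum_congr rfl (fun m hm => by rw [hcl m hm])]
    simp only [Finset.sum_const, nsmul_eq_mul]
    field_simp
    ring

/-- Variance bound for one register: with `X m = ‖(1/2)(b + ρ m b)‖²`,
`Var_{m∈M} X ≤ (1/4) Σ_j (χ_j(m₀)/d_j) s_j(b)` where
`s_j(b) = (d_j/|G|) Σ_g conj(χ_j(g)) |⟪b, ρ g b⟫|²`. -/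
theorem stmt4 {G : Type*} [Group G] [Fintype G]
    {J : Type*} [Fintype J]
    (W : J → Type*) [∀ j, NormedAddCommGroup (W j)] [∀ j, InnerProductSpace ℂ (W j)]
    [∀ j, FiniteDimensional ℂ (W j)]
    (σ : ∀ j, Representation ℂ G (W j)) (hfam : IsCompleteFamily W σ)
    {V : Type*} [NormedAddCommGroup V] [InnerProductSpace ℂ V] [FiniteDimensional ℂ V]
    (ρ : Representation ℂ G V) (hρu : IsUnitaryRep ρ) (hρi : IsIrreducibleRep ρ)
    (M : Finset G) (m₀ : G) (hm₀M : m₀ ∈ M)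
    (hM : ∀ m : G, m ∈ M ↔ IsConj m₀ m)
    (hinv : ∀ m ∈ M, m * m = 1 ∧ m ≠ 1)
    (b : V) :
    (((1 / (M.card : ℝ)) * ∑ m ∈ M, (‖(1/2 : ℂ) • (b + ρ m b)‖ ^ 2) ^ 2
        - ((1 / (M.card : ℝ)) * ∑ m ∈ M, ‖(1/2 : ℂ) • (b + ρ m b)‖ ^ 2) ^ 2 : ℝ) : ℂ)
      ≤ (1/4 : ℂ) * ∑ j, repChar (σ j) m₀ / (Module.finrank ℂ (W j) : ℂ) *
          ((Module.finrank ℂ (W j) : ℂ) / (Fintype.card G : ℂ) *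
            ∑ g : G, starRingEnd ℂ (repChar (σ j) g) * (‖⟪b, ρ g b⟫_ℂ‖ : ℂ) ^ 2) := by
  classical
  have hMc : (M.card : ℝ) ≠ 0 := by
    exact_mod_cast (Finset.card_pos.2 ⟨m₀, hm₀M⟩).ne'
  have hGc : (Fintype.card G : ℂ) ≠ 0 := by exact_mod_cast Fintype.card_ne_zero
  have hMc' : (M.card : ℂ) ≠ 0 := by exact_mod_cast hMc
  have hR : (1/4 : ℂ) * ∑ j, repChar (σ j) m₀ / (Module.finrank ℂ (W j) : ℂ) *
          ((Module.finrank ℂ (W j) : ℂ) / (Fintype.card G : ℂ) *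
            ∑ g : G, starRingEnd ℂ (repChar (σ j) g) * (‖⟪b, ρ g b⟫_ℂ‖ : ℂ) ^ 2)
      = ((1/4 * ((1 / (M.card : ℝ)) * ∑ m ∈ M, ‖⟪b, ρ m b⟫_ℂ‖ ^ 2) : ℝ) : ℂ) := by
    have h1 : ∀ j, repChar (σ j) m₀ / (Module.finrank ℂ (W j) : ℂ) *
          ((Module.finrank ℂ (W j) : ℂ) / (Fintype.card G : ℂ) *
            ∑ g : G, starRingEnd ℂ (repChar (σ j) g) * (‖⟪b, ρ g b⟫_ℂ‖ : ℂ) ^ 2)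
        = (Fintype.card G : ℂ)⁻¹ * ∑ g : G, repChar (σ j) m₀ * starRingEnd ℂ (repChar (σ j) g) *
            (‖⟪b, ρ g b⟫_ℂ‖ : ℂ) ^ 2 := by
      intro j
      have hn : (Module.finrank ℂ (W j) : ℂ) ≠ 0 := by
        obtain ⟨⟨v, hv⟩, _⟩ := hfam.2.1 j
        have : Nontrivial (W j) := ⟨v, 0, hv⟩
        exact_mod_cast Module.finrank_pos.ne'
      simp only [mul_assoc, ← Finset.mul_sum]
      field_simp
    rw [Finset.sum_congr rfl fun j _ => h1 j, ← Finset.mul_sum, Finset.sum_comm]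
    simp only [← Finset.sum_mul, second_orth W σ hfam M m₀ hm₀M hM]
    simp only [ite_mul, zero_mul, Finset.sum_ite_mem, Finset.univ_inter, ← Finset.mul_sum]
    push_cast
    field_simp
  rw [hR, Complex.real_le_real]
  have hX : ∀ m, ‖(1/2 : ℂ) • (b + ρ m b)‖ ^ 2 = (1/2) * (‖b‖ ^ 2 + (⟪b, ρ m b⟫_ℂ).re) := by
    intro m
    have h2 : ‖ρ m b‖ ^ 2 = ‖b‖ ^ 2 := by
      rw [← inner_self_eq_norm_sq (𝕜 := ℂ), ← inner_self_eq_norm_sq (𝕜 := ℂ), hρu]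
    rw [norm_smul, mul_pow, norm_add_sq (𝕜 := ℂ), h2]
    simp
    ring
  have hle : ∑ m ∈ M, (⟪b, ρ m b⟫_ℂ).re ^ 2 ≤ ∑ m ∈ M, ‖⟪b, ρ m b⟫_ℂ‖ ^ 2 := by
    refine Finset.sum_le_sum fun m _ => ?_
    rw [← sq_abs]
    exact pow_le_pow_left₀ (abs_nonneg _) (Complex.abs_re_le_norm _) 2
  simp only [hX]
  generalize ‖b‖ ^ 2 = B
  have e1 : ∑ m ∈ M, (1/2 * (B + (⟪b, ρ m b⟫_ℂ).re)) ^ 2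
      = 1/4 * (M.card * B ^ 2 + 2 * B * ∑ m ∈ M, (⟪b, ρ m b⟫_ℂ).re
        + ∑ m ∈ M, (⟪b, ρ m b⟫_ℂ).re ^ 2) := by
    rw [Finset.mul_sum, ← nsmul_eq_mul, ← Finset.sum_const, ← Finset.sum_add_distrib,
      ← Finset.sum_add_distrib, Finset.mul_sum]
    exact Finset.sum_congr rfl fun m _ => by ring
  have e2 : ∑ m ∈ M, (1/2 * (B + (⟪b, ρ m b⟫_ℂ).re))
      = 1/2 * (M.card * B + ∑ m ∈ M, (⟪b, ρ m b⟫_ℂ).re) := by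
    rw [← Finset.mul_sum, Finset.sum_add_distrib]; simp
  rw [e1, e2]
  generalize ∑ m ∈ M, (⟪b, ρ m b⟫_ℂ).re = S at *
  have hpos : 0 ≤ 1 / (M.card : ℝ) := by positivity
  have h3 := mul_le_mul_of_nonneg_left hle hpos
  have h4 : 1 / (M.card : ℝ) * (1/4 * (M.card * B ^ 2 + 2 * B * S
        + ∑ m ∈ M, (⟪b, ρ m b⟫_ℂ).re ^ 2)) - (1 / (M.card : ℝ) * (1/2 * (M.card * B + S))) ^ 2
      = 1/4 * (1 / (M.card : ℝ) * ∑ m ∈ M, (⟪b, ρ m b⟫_ℂ).re ^ 2)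
        - 1/4 * (1 / (M.card : ℝ) * S) ^ 2 := by
    field_simp
    ring
  rw [h4]
  nlinarith [sq_nonneg (1 / (M.card : ℝ) * S)]
end
end

section
/- Let G be a finite group, let (σ_j)_{j∈J} be a complete family of irreducibles for G, let k ≥ 1, let ρ be a unitary representation of the direct power G^k on a finite-dimensional complex inner product space V, and let M ⊆ G be a conjugacy class of involutions with representative m₀. Then for every unit vector b ∈ V, (1/|M|) Σ_{m∈M} ‖Π_m b‖² = 2^{-k} ( 1 + Σ_{∅ ≠ I ⊆ {1,…,k}} Σ_{j∈J} (χ_j(m₀)/d_j) ‖Π_j^I b‖² ), where Π_m = 2^{-k} Σ_{I ⊆ {1,…,k}} ρ(m^I) and Π_j^I = (d_j/|G|) Σ_{g∈G} conj(χ_j(g)) ρ(g^I). -/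
noncomputable section

open scoped BigOperators InnerProductSpace

theorem repChar_inv {G V : Type*} [Group G] [NormedAddCommGroup V] [InnerProductSpace ℂ V]
    [FiniteDimensional ℂ V] (ρ : Representation ℂ G V) (h : IsUnitaryRep ρ) (g : G) :
    starRingEnd ℂ (repChar ρ g) = repChar ρ g⁻¹ := by
  unfold repChar
  rw [LinearMap.trace_eq_sum_inner _ (stdOrthonormalBasis ℂ V),
    LinearMap.trace_eq_sum_inner _ (stdOrthonormalBasis ℂ V), map_sum]
  refine Finset.sum_congr rfl fun i _ => ?_
  rw [inner_conj_symm, ← h g⁻¹, ← Module.End.mul_apply, ← map_mul]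
  simp

theorem repChar_conj {G V : Type*} [Group G] [AddCommGroup V] [Module ℂ V]
    (ρ : Representation ℂ G V) (g h : G) : repChar ρ (h * g * h⁻¹) = repChar ρ g := by
  unfold repChar
  rw [map_mul, LinearMap.trace_mul_comm, ← map_mul]
  simp

theorem irr_to {G V : Type*} [Group G] [AddCommGroup V] [Module ℂ V]
    {ρ : Representation ℂ G V} (h : IsIrreducibleRep ρ) : ρ.IsIrreducible := by
  obtain ⟨⟨v, hv⟩, h2⟩ := h
  have : Nontrivial (Subrepresentation ρ) := by
    refine ⟨⊥, ⊤, fun e => hv ?_⟩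
    have e' : (⊥ : Submodule ℂ V) = ⊤ := congrArg Subrepresentation.toSubmodule e
    have : v ∈ (⊥ : Submodule ℂ V) := by rw [e']; trivial
    simpa using this
  refine ⟨fun U => ?_⟩
  rcases h2 U.toSubmodule (fun g v hv => U.apply_mem_toSubmodule g hv) with h | h
  · left; exact Subrepresentation.toSubmodule_injective h
  · right; exact Subrepresentation.toSubmodule_injective h

theorem schur {G V : Type*} [Group G] [AddCommGroup V] [Module ℂ V] [FiniteDimensional ℂ V]
    {ρ : Representation ℂ G V} (h : IsIrreducibleRep ρ) (T : V →ₗ[ℂ] V)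
    (hT : ∀ g v, T (ρ g v) = ρ g (T v)) :
    T = (LinearMap.trace ℂ V T / (Module.finrank ℂ V : ℂ)) • LinearMap.id := by
  obtain ⟨⟨v, hv⟩, h2⟩ := h
  have : Nontrivial V := ⟨v, 0, hv⟩
  obtain ⟨c, hc⟩ := Module.End.exists_eigenvalue T
  have hTc : T = c • LinearMap.id := by
    rcases h2 (Module.End.eigenspace T c) (fun g v hv => by
      rw [Module.End.mem_eigenspace_iff] at hv ⊢
      rw [hT, hv, map_smul]) with h | h
    · exact absurd h hc
    · ext v
      have : v ∈ Module.End.eigenspace T c := by rw [h]; trivial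
      rw [Module.End.mem_eigenspace_iff] at this
      simpa using this
  have hd : (Module.finrank ℂ V : ℂ) ≠ 0 := by
    exact_mod_cast (Module.finrank_pos (R := ℂ) (M := V)).ne'
  have : LinearMap.trace ℂ V T = c * Module.finrank ℂ V := by
    rw [hTc, map_smul, LinearMap.trace_id, smul_eq_mul]
  rw [this, mul_div_cancel_right₀ _ hd]
  exact hTc

theorem class_scalar {G V : Type*} [Group G] [Fintype G] [AddCommGroup V] [Module ℂ V]
    [FiniteDimensional ℂ V]
    {ρ : Representation ℂ G V} (h : IsIrreducibleRep ρ) (f : G → ℂ)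
    (hf : ∀ g x, f (x * g * x⁻¹) = f g) :
    (∑ g, f g • ρ g : V →ₗ[ℂ] V)
      = ((∑ g, f g * repChar ρ g) / (Module.finrank ℂ V : ℂ)) • LinearMap.id := by
  have := schur h (∑ g, f g • ρ g : V →ₗ[ℂ] V) (fun x v => by
    simp only [LinearMap.sum_apply, LinearMap.smul_apply, map_sum, map_smul]
    rw [← (MulAut.conj x).toEquiv.sum_comp]
    refine Finset.sum_congr rfl fun g _ => ?_
    simp only [MulEquiv.toEquiv_eq_coe, EquivLike.coe_coe, MulAut.conj_apply, hf]
    rw [← Module.End.mul_apply, ← Module.End.mul_apply, ← map_mul, ← map_mul]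
    simp)
  rw [this]
  simp [map_sum, repChar]

theorem char_orth {G : Type*} [Group G] [Fintype G] {J : Type*}
    (W : J → Type*) [∀ j, NormedAddCommGroup (W j)] [∀ j, InnerProductSpace ℂ (W j)]
    [∀ j, FiniteDimensional ℂ (W j)]
    (σ : ∀ j, Representation ℂ G (W j)) (hfam : IsCompleteFamily W σ) [DecidableEq J] (i j : J) :
    ∑ g, starRingEnd ℂ (repChar (σ j) g) * repChar (σ i) g
      = if i = j then (Fintype.card G : ℂ) else 0 := by
  obtain ⟨hu, hi, hn, -⟩ := hfam
  have := irr_to (hi i)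
  have := irr_to (hi j)
  have hG : (Nat.card G : ℂ) ≠ 0 := by exact_mod_cast Nat.card_pos.ne'
  let : Invertible (Nat.card G : ℂ) := invertibleOfNonzero hG
  have key := Representation.char_orthonormal (σ i) (σ j)
  have e : ∑ g, starRingEnd ℂ (repChar (σ j) g) * repChar (σ i) g
      = ∑ g, (σ i).character g * (σ j).character g⁻¹ := by
    refine Finset.sum_congr rfl fun g _ => ?_
    rw [repChar_inv _ (hu j), mul_comm]; rfl
  rw [e]
  rw [inv_mul_eq_iff_eq_mul₀ hG] at key
  rw [key, Nat.card_eq_fintype_card]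
  by_cases hij : i = j
  · subst hij
    have : Nonempty ((σ i).Equiv (σ i)) := ⟨Representation.Equiv.mk (LinearEquiv.refl ℂ _) (by
      intro g; rfl)⟩
    simp [this]
  · have : ¬ Nonempty ((σ j).Equiv (σ i)) := by
      rintro ⟨e⟩
      refine hn j i (Ne.symm hij) ⟨e.toLinearEquiv, fun g v => ?_⟩
      exact LinearMap.congr_fun (e.isIntertwining' g) v
    simp [this, hij]

theorem alg_intertwine {G V₁ V₂ : Type*} [Group G] [AddCommGroup V₁] [Module ℂ V₁]
    [AddCommGroup V₂] [Module ℂ V₂]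
    (ρ₁ : Representation ℂ G V₁) (ρ₂ : Representation ℂ G V₂) (e : V₁ →ₗ[ℂ] V₂)
    (he : ∀ g v, e (ρ₁ g v) = ρ₂ g (e v)) (z : MonoidAlgebra ℂ G) (v : V₁) :
    e (ρ₁.asAlgebraHom z v) = ρ₂.asAlgebraHom z (e v) := by
  induction z using MonoidAlgebra.induction_linear with
  | zero => simp
  | add x y hx hy => simp [hx, hy]
  | single g r => simp [Representation.asAlgebraHom_single, he]

theorem irr_kill {G : Type*} [Group G] {J : Type*}
    (W : J → Type*) [∀ j, NormedAddCommGroup (W j)] [∀ j, InnerProductSpace ℂ (W j)]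
    [∀ j, FiniteDimensional ℂ (W j)]
    (σ : ∀ j, Representation ℂ G (W j)) (hfam : IsCompleteFamily W σ)
    (z : MonoidAlgebra ℂ G) (hz : ∀ j, (σ j).asAlgebraHom z = 0)
    {U : Type*} [AddCommGroup U] [Module ℂ U] [FiniteDimensional ℂ U]
    (τ : Representation ℂ G U) (hτ : IsIrreducibleRep τ) (v : U) : τ.asAlgebraHom z v = 0 := by
  let e : U ≃ₗ[ℂ] (Fin (Module.finrank ℂ U) → ℂ) := (Module.finBasis ℂ U).equivFun
  let τ' : Representation ℂ G (Fin (Module.finrank ℂ U) → ℂ) :=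
    { toFun := fun g => e.toLinearMap ∘ₗ τ g ∘ₗ e.symm.toLinearMap
      map_one' := by ext; simp
      map_mul' := by intro x y; ext; simp }
  have he : ∀ g v, e (τ g v) = τ' g (e v) := fun g v => by
    change _ = e (τ g (e.symm (e v))); simp
  have hτ' : IsIrreducibleRep τ' := by
    obtain ⟨⟨v, hv⟩, h2⟩ := hτ
    refine ⟨⟨e v, by simpa using hv⟩, fun S hS => ?_⟩
    rcases h2 (S.comap e.toLinearMap) (fun g v hv => by
      have := hS g (e v) hv
      rw [← he] at this
      exact this) with h | h
    · left
      rw [eq_bot_iff]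
      intro x hx
      have : e.symm x ∈ S.comap e.toLinearMap := by simpa using hx
      rw [h] at this
      simpa using this
    · right
      rw [eq_top_iff]
      intro x _
      have : e.symm x ∈ S.comap e.toLinearMap := by rw [h]; trivial
      simpa using this
  obtain ⟨j, φ, hφ⟩ := hfam.2.2.2 _ τ' hτ'
  apply e.injective
  apply φ.injective
  have h1 := alg_intertwine τ τ' e.toLinearMap he z v
  have h2 := alg_intertwine τ' (σ j) φ.toLinearMap hφ z (e v)
  simp only [LinearEquiv.coe_coe] at h1 h2
  rw [h1, h2, hz]; simp

theorem kill_aux {G : Type*} [Group G] {J : Type*}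
    (W : J → Type*) [∀ j, NormedAddCommGroup (W j)] [∀ j, InnerProductSpace ℂ (W j)]
    [∀ j, FiniteDimensional ℂ (W j)]
    (σ : ∀ j, Representation ℂ G (W j)) (hfam : IsCompleteFamily W σ)
    (z : MonoidAlgebra ℂ G) (hz : ∀ j, (σ j).asAlgebraHom z = 0)
    {V : Type*} [NormedAddCommGroup V] [InnerProductSpace ℂ V] [FiniteDimensional ℂ V]
    (τ : Representation ℂ G V) (hτ : IsUnitaryRep τ) (n : ℕ) :
    ∀ U : Submodule ℂ V, Module.finrank ℂ U = n → (∀ g, ∀ v ∈ U, τ g v ∈ U) →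
      ∀ v ∈ U, τ.asAlgebraHom z v = 0 := by
  induction n using Nat.strong_induction_on with
  | _ n ih =>
  intro U hn hU v hv
  let S : Subrepresentation τ := ⟨U, fun g v hv => hU g v hv⟩
  by_cases hirr : IsIrreducibleRep S.toRepresentation
  · have h1 := irr_kill W σ hfam z hz S.toRepresentation hirr ⟨v, hv⟩
    have h2 := alg_intertwine S.toRepresentation τ U.subtype (fun g v => rfl) z ⟨v, hv⟩
    rw [h1] at h2
    simpa using h2.symm
  · by_cases hex : ∃ w : U, w ≠ 0
    · unfold IsIrreducibleRep at hirr
      rw [not_and] at hirr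
      have := hirr hex
      push Not at this
      obtain ⟨X, hX, hX0, hX1⟩ := this
      let Y : Submodule ℂ V := X.map U.subtype
      have hYU : Y ≤ U := Submodule.map_subtype_le U X
      have hYinv : ∀ g, ∀ v ∈ Y, τ g v ∈ Y := by
        rintro g _ ⟨x, hx, rfl⟩
        exact ⟨_, hX g x hx, rfl⟩
      have hY0 : Y ≠ ⊥ := by
        intro h
        apply hX0
        rw [eq_bot_iff]
        intro x hx
        have hxY : (x : V) ∈ Y := ⟨x, hx, rfl⟩
        rw [h] at hxY
        simpa using hxY
      have hY1 : Y ≠ U := by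
        intro h
        apply hX1
        rw [eq_top_iff]
        rintro x -
        have : (x : V) ∈ Y := by rw [h]; exact x.2
        obtain ⟨y, hy, hyx⟩ := this
        have : y = x := Subtype.ext hyx
        exact this ▸ hy
      have hYlt : Y < U := lt_of_le_of_ne hYU hY1
      have hZlt : Yᗮ ⊓ U < U := by
        refine lt_of_le_of_ne inf_le_right fun h => hY0 ?_
        rw [eq_bot_iff]
        intro y hy
        have h3 : y ∈ Yᗮ := (inf_eq_right.1 h) (hYU hy)
        have := (Submodule.mem_orthogonal Y y).1 h3 y hy
        simpa using this
      have hZinv : ∀ g, ∀ v ∈ Yᗮ ⊓ U, τ g v ∈ Yᗮ ⊓ U := by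
        rintro g w ⟨hw1, hw2⟩
        refine ⟨?_, hU g w hw2⟩
        intro u hu
        rw [← hτ g⁻¹, ← Module.End.mul_apply (τ g⁻¹) (τ g), ← map_mul]
        simpa using (Submodule.mem_orthogonal Y w).1 hw1 _ (hYinv g⁻¹ u hu)
      obtain ⟨y, hy, w, hw, hyw⟩ := Submodule.exists_add_mem_mem_orthogonal (K := Y) v
      have hwU : w ∈ U := by
        have : w = v - y := by rw [hyw]; abel
        rw [this]; exact U.sub_mem hv (hYU hy)
      rw [hyw, map_add,
        ih _ (hn ▸ Submodule.finrank_lt_finrank_of_lt hYlt) Y rfl hYinv y hy,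
        ih _ (hn ▸ Submodule.finrank_lt_finrank_of_lt hZlt) _ rfl hZinv w ⟨hw, hwU⟩, add_zero]
    · push Not at hex
      have : v = 0 := congrArg Subtype.val (hex ⟨v, hv⟩)
      simp [this]

theorem kill {G : Type*} [Group G] {J : Type*}
    (W : J → Type*) [∀ j, NormedAddCommGroup (W j)] [∀ j, InnerProductSpace ℂ (W j)]
    [∀ j, FiniteDimensional ℂ (W j)]
    (σ : ∀ j, Representation ℂ G (W j)) (hfam : IsCompleteFamily W σ)
    (z : MonoidAlgebra ℂ G) (hz : ∀ j, (σ j).asAlgebraHom z = 0)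
    {V : Type*} [NormedAddCommGroup V] [InnerProductSpace ℂ V] [FiniteDimensional ℂ V]
    (τ : Representation ℂ G V) (hτ : IsUnitaryRep τ) : τ.asAlgebraHom z = 0 := by
  ext v
  exact kill_aux W σ hfam z hz τ hτ _ ⊤ rfl (fun _ _ _ => trivial) v trivial

/-- group algebra element of a function -/
def Zel {G : Type*} [Group G] [Fintype G] (f : G → ℂ) : MonoidAlgebra ℂ G :=
  ∑ g, MonoidAlgebra.single g (f g)

theorem Zel_act {G V : Type*} [Group G] [Fintype G] [AddCommGroup V] [Module ℂ V]
    (ρ : Representation ℂ G V) (f : G → ℂ) :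
    ρ.asAlgebraHom (Zel f) = ∑ g, f g • ρ g := by
  simp [Zel, map_sum, Representation.asAlgebraHom_single]

theorem isoProj_eq {G V : Type*} [Group G] [Fintype G] [AddCommGroup V] [Module ℂ V]
    (d : ℕ) (χ : G → ℂ) (ρ : Representation ℂ G V) :
    isoProj d χ ρ = ρ.asAlgebraHom (((d : ℂ) / (Fintype.card G : ℂ)) •
      Zel (fun g => starRingEnd ℂ (χ g))) := by
  rw [map_smul, Zel_act]; rfl

theorem isoProj_irr {G : Type*} [Group G] [Fintype G] {J : Type*}
    (W : J → Type*) [∀ j, NormedAddCommGroup (W j)] [∀ j, InnerProductSpace ℂ (W j)]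
    [∀ j, FiniteDimensional ℂ (W j)]
    (σ : ∀ j, Representation ℂ G (W j)) (hfam : IsCompleteFamily W σ) [DecidableEq J] (i j : J) :
    isoProj (Module.finrank ℂ (W j)) (repChar (σ j)) (σ i)
      = if i = j then LinearMap.id else 0 := by
  have h1 := class_scalar (hfam.2.1 i) (fun g => starRingEnd ℂ (repChar (σ j) g))
    (fun g x => by rw [repChar_conj])
  have hG : (Fintype.card G : ℂ) ≠ 0 := by exact_mod_cast Fintype.card_ne_zero
  unfold isoProj
  rw [h1, char_orth W σ hfam i j]
  split_ifs with h
  · subst h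
    obtain ⟨v, hv⟩ := (hfam.2.1 i).1
    have : Nontrivial (W i) := ⟨v, 0, hv⟩
    have hd : (Module.finrank ℂ (W i) : ℂ) ≠ 0 := by
      exact_mod_cast (Module.finrank_pos (R := ℂ) (M := W i)).ne'
    rw [smul_smul]
    field_simp
    simp
  · simp

theorem isoProj_idem {G : Type*} [Group G] [Fintype G] {J : Type*}
    (W : J → Type*) [∀ j, NormedAddCommGroup (W j)] [∀ j, InnerProductSpace ℂ (W j)]
    [∀ j, FiniteDimensional ℂ (W j)]
    (σ : ∀ j, Representation ℂ G (W j)) (hfam : IsCompleteFamily W σ)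
    {V : Type*} [NormedAddCommGroup V] [InnerProductSpace ℂ V] [FiniteDimensional ℂ V]
    (τ : Representation ℂ G V) (hτ : IsUnitaryRep τ) (j : J) :
    isoProj (Module.finrank ℂ (W j)) (repChar (σ j)) τ *
      isoProj (Module.finrank ℂ (W j)) (repChar (σ j)) τ =
      isoProj (Module.finrank ℂ (W j)) (repChar (σ j)) τ := by
  classical
  rw [← sub_eq_zero, isoProj_eq, ← map_mul, ← map_sub]
  refine kill W σ hfam _ (fun i => ?_) τ hτ
  rw [map_sub, map_mul, ← isoProj_eq, isoProj_irr W σ hfam]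
  split_ifs <;> ext <;> simp

theorem isoProj_symm {G : Type*} [Group G] [Fintype G]
    {V U : Type*} [NormedAddCommGroup V] [InnerProductSpace ℂ V]
    [NormedAddCommGroup U] [InnerProductSpace ℂ U] [FiniteDimensional ℂ U]
    (τ : Representation ℂ G V) (hτ : IsUnitaryRep τ)
    (σ : Representation ℂ G U) (hσ : IsUnitaryRep σ) (d : ℕ) (v w : V) :
    ⟪isoProj d (repChar σ) τ v, w⟫_ℂ = ⟪v, isoProj d (repChar σ) τ w⟫_ℂ := by
  simp only [isoProj, LinearMap.smul_apply, LinearMap.sum_apply, inner_smul_left, inner_smul_right,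
    sum_inner, inner_sum]
  congr 1
  · simp
  rw [← Equiv.sum_comp (Equiv.inv G)]
  refine Finset.sum_congr rfl fun g _ => ?_
  simp only [Equiv.inv_apply, Complex.conj_conj]
  rw [repChar_inv σ hσ, ← hτ g, ← Module.End.mul_apply, ← map_mul]
  simp

theorem isoProj_norm {G : Type*} [Group G] [Fintype G] {J : Type*}
    (W : J → Type*) [∀ j, NormedAddCommGroup (W j)] [∀ j, InnerProductSpace ℂ (W j)]
    [∀ j, FiniteDimensional ℂ (W j)]
    (σ : ∀ j, Representation ℂ G (W j)) (hfam : IsCompleteFamily W σ)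
    {V : Type*} [NormedAddCommGroup V] [InnerProductSpace ℂ V] [FiniteDimensional ℂ V]
    (τ : Representation ℂ G V) (hτ : IsUnitaryRep τ) (j : J) (b : V) :
    (‖isoProj (Module.finrank ℂ (W j)) (repChar (σ j)) τ b‖ : ℂ) ^ 2 =
      ⟪b, isoProj (Module.finrank ℂ (W j)) (repChar (σ j)) τ b⟫_ℂ := by
  have := inner_self_eq_norm_sq_to_K (𝕜 := ℂ)
    (isoProj (Module.finrank ℂ (W j)) (repChar (σ j)) τ b)
  simp only [Complex.coe_algebraMap] at this
  rw [← this, isoProj_symm τ hτ _ (hfam.1 j), ← Module.End.mul_apply, isoProj_idem W σ hfam τ hτ]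

theorem avg_eq {G : Type*} [Group G] [Fintype G] {J : Type*} [Fintype J]
    (W : J → Type*) [∀ j, NormedAddCommGroup (W j)] [∀ j, InnerProductSpace ℂ (W j)]
    [∀ j, FiniteDimensional ℂ (W j)]
    (σ : ∀ j, Representation ℂ G (W j)) (hfam : IsCompleteFamily W σ)
    {V : Type*} [NormedAddCommGroup V] [InnerProductSpace ℂ V] [FiniteDimensional ℂ V]
    (τ : Representation ℂ G V) (hτ : IsUnitaryRep τ)
    (M : Finset G) (m₀ : G) (hm₀M : m₀ ∈ M)
    (hM : ∀ m : G, m ∈ M ↔ IsConj m₀ m) :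
    (1 / (M.card : ℂ)) • ∑ m ∈ M, τ m = ∑ j, (repChar (σ j) m₀ / (Module.finrank ℂ (W j) : ℂ)) •
      isoProj (Module.finrank ℂ (W j)) (repChar (σ j)) τ := by
  classical
  have hMc : (M.card : ℂ) ≠ 0 := by exact_mod_cast (Finset.card_pos.2 ⟨_, hm₀M⟩).ne'
  let f : G → ℂ := fun g => if g ∈ M then 1 else 0
  have hf : ∑ m ∈ M, τ m = τ.asAlgebraHom (Zel f) := by
    rw [Zel_act]
    simp [f, ite_smul, Finset.sum_ite_mem]
  rw [hf, ← sub_eq_zero]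
  simp only [isoProj_eq]
  simp only [← map_smul, ← map_sum, ← map_sub]
  refine kill W σ hfam _ (fun i => ?_) τ hτ
  rw [map_sub, map_smul, map_sum]
  simp only [map_smul _ (repChar _ _ / _), ← isoProj_eq, isoProj_irr W σ hfam]
  rw [Zel_act, class_scalar (hfam.2.1 i) f]
  · have : ∑ g, f g * repChar (σ i) g = M.card * repChar (σ i) m₀ := by
      simp only [f, ite_mul, one_mul, zero_mul, Finset.sum_ite_mem, Finset.univ_inter]
      rw [← nsmul_eq_mul, ← Finset.sum_const]
      refine Finset.sum_congr rfl fun m hm => ?_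
      obtain ⟨c, hc⟩ := isConj_iff.1 ((hM m).1 hm)
      rw [← hc, repChar_conj]
    rw [this]
    simp only [smul_ite, smul_zero, Finset.sum_ite_eq, Finset.mem_univ, if_true]
    rw [smul_smul, sub_eq_zero]
    congr 1
    field_simp
  · intro g x
    have : x * g * x⁻¹ ∈ M ↔ g ∈ M := by
      rw [hM, hM]
      have h : IsConj g (x * g * x⁻¹) := isConj_iff.2 ⟨x, rfl⟩
      exact ⟨fun h' => h'.trans h.symm, fun h' => h'.trans h⟩
    simp [f, this]

/-- the diagonal embedding on the registers in `I` -/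
def onIHom {G : Type*} [Group G] {k : ℕ} (I : Finset (Fin k)) : G →* (Fin k → G) where
  toFun g := onI g I
  map_one' := by ext i; simp [onI]
  map_mul' x y := by ext i; by_cases h : i ∈ I <;> simp [onI, h]

theorem onI_symmDiff {G : Type*} [Group G] {k : ℕ} (m : G) (hm : m * m = 1)
    (I I' : Finset (Fin k)) : onI m (symmDiff I I') = onI m I * onI m I' := by
  ext i
  by_cases h : i ∈ I <;> by_cases h' : i ∈ I' <;> simp [onI, Finset.mem_symmDiff, h, h', hm]

theorem invProj_norm {G : Type*} [Group G] {k : ℕ}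
    {V : Type*} [NormedAddCommGroup V] [InnerProductSpace ℂ V]
    (ρ : Representation ℂ (Fin k → G) V) (hρu : IsUnitaryRep ρ) (m : G) (hm : m * m = 1) (b : V) :
    (‖invProj ρ m b‖ : ℂ) ^ 2 =
      ((2 : ℂ) ^ k)⁻¹ * ∑ I : Finset (Fin k), ⟪b, ρ (onI m I) b⟫_ℂ := by
  have := inner_self_eq_norm_sq_to_K (𝕜 := ℂ) (invProj ρ m b)
  simp only [Complex.coe_algebraMap] at this
  rw [← this]
  simp only [invProj, LinearMap.smul_apply, LinearMap.sum_apply, inner_smul_left, inner_smul_right,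
    sum_inner]
  have h : ∀ I : Finset (Fin k), ⟪ρ (onI m I) b, ∑ I', ρ (onI m I') b⟫_ℂ
      = ∑ I : Finset (Fin k), ⟪b, ρ (onI m I) b⟫_ℂ := by
    intro I
    have hI : onI m I * onI m I = 1 := by
      rw [← onI_symmDiff m hm]; ext; simp [onI]
    rw [inner_sum, ← Equiv.sum_comp (symmDiff_right_involutive I).toPerm
      (fun I' => ⟪b, ρ (onI m I') b⟫_ℂ)]
    refine Finset.sum_congr rfl fun I' _ => ?_
    rw [← hρu (onI m I), ← Module.End.mul_apply, ← map_mul, hI, Function.Involutive.coe_toPerm,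
      onI_symmDiff m hm, map_mul, Module.End.mul_apply, map_one, Module.End.one_apply]
  simp only [h, Finset.sum_const, Finset.card_univ, Fintype.card_finset, Fintype.card_fin]
  have h2 : starRingEnd ℂ (2 : ℂ) = 2 := map_ofNat _ 2
  simp [h2]

/-- Multiregister expectation formula: for a unitary representation `ρ` of `G^k`
and a unit vector `b`, the average over `m ∈ M` of `‖Π_m b‖²` equals
`2^{-k} (1 + Σ_{∅≠I⊆[k]} Σ_j (χ_j(m₀)/d_j) ‖Π_j^I b‖²)`. -/
theorem stmt6 {G : Type*} [Group G] [Fintype G]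
    {J : Type*} [Fintype J]
    (W : J → Type*) [∀ j, NormedAddCommGroup (W j)] [∀ j, InnerProductSpace ℂ (W j)]
    [∀ j, FiniteDimensional ℂ (W j)]
    (σ : ∀ j, Representation ℂ G (W j)) (hfam : IsCompleteFamily W σ)
    {k : ℕ} (hk : 1 ≤ k)
    {V : Type*} [NormedAddCommGroup V] [InnerProductSpace ℂ V] [FiniteDimensional ℂ V]
    (ρ : Representation ℂ (Fin k → G) V) (hρu : IsUnitaryRep ρ)
    (M : Finset G) (m₀ : G) (hm₀M : m₀ ∈ M)
    (hM : ∀ m : G, m ∈ M ↔ IsConj m₀ m)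
    (hinv : ∀ m ∈ M, m * m = 1 ∧ m ≠ 1)
    (b : V) (hb : ‖b‖ = 1) :
    (1 / (M.card : ℂ)) * ∑ m ∈ M, (‖invProj ρ m b‖ : ℂ) ^ 2
      = ((2 : ℂ) ^ k)⁻¹ * (1 +
          ∑ I ∈ Finset.univ.filter (fun I : Finset (Fin k) => I ≠ ∅),
            ∑ j, repChar (σ j) m₀ / (Module.finrank ℂ (W j) : ℂ) *
              (‖isoProjI ρ (Module.finrank ℂ (W j)) (repChar (σ j)) I b‖ : ℂ) ^ 2) := by
  have hMc : (M.card : ℂ) ≠ 0 := by exact_mod_cast (Finset.card_pos.2 ⟨_, hm₀M⟩).ne'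
  have key : ∀ I : Finset (Fin k),
      (1 / (M.card : ℂ)) * ∑ m ∈ M, ⟪b, ρ (onI m I) b⟫_ℂ =
      ∑ j, repChar (σ j) m₀ / (Module.finrank ℂ (W j) : ℂ) *
              (‖isoProjI ρ (Module.finrank ℂ (W j)) (repChar (σ j)) I b‖ : ℂ) ^ 2 := by
    intro I
    let τ : Representation ℂ G V := ρ.comp (onIHom I)
    have hτ : IsUnitaryRep τ := fun g v w => hρu _ v w
    have h1 := avg_eq W σ hfam τ hτ M m₀ hm₀M hM
    have h2 := congrArg (fun T : V →ₗ[ℂ] V => ⟪b, T b⟫_ℂ) h1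
    simp only [LinearMap.smul_apply, LinearMap.sum_apply, inner_smul_right, inner_sum] at h2
    refine h2.trans (Finset.sum_congr rfl fun j _ => ?_)
    rw [← isoProj_norm W σ hfam τ hτ]
    rfl
  rw [Finset.sum_congr rfl (fun m hm => invProj_norm ρ hρu m (hinv m hm).1 b),
    ← Finset.mul_sum, mul_left_comm, Finset.sum_comm, Finset.mul_sum]
  congr 1
  rw [← Finset.sum_congr rfl (fun I _ => key I), Finset.filter_ne' Finset.univ ∅,
    ← Finset.add_sum_erase _ _ (Finset.mem_univ ∅)]
  congr 1
  have h0 : ∀ m : G, onI m (∅ : Finset (Fin k)) = 1 := fun m => by ext; simp [onI]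
  simp [h0, hb, hMc]
end
end

section
/- Let G be a finite group, let (σ_j)_{j∈J} be a complete family of irreducibles for G, let k ≥ 1, and let ρ be a unitary representation of G^k on a finite-dimensional complex inner product space V. Then for every unit vector b ∈ V and every j ∈ J, the nonnegative real number Σ_{I₁ ⊆ {1,…,k}} Σ_{I₂ ⊆ {1,…,k}} (d_j/|G|) Σ_{g∈G} conj(χ_j(g)) ⟨b, ρ(g^{I₁}) b⟩ · conj(⟨b, ρ(g^{I₂}) b⟩) is at most 2^k · d_j² · Σ_{I ⊆ {1,…,k}} Σ_{j'∈J} ‖Π_{j'}^I b‖² / d_{j'}, where Π_{j'}^I = (d_{j'}/|G|) Σ_{g∈G} conj(χ_{j'}(g)) ρ(g^I). -/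
noncomputable section

open scoped BigOperators InnerProductSpace

open scoped ComplexOrder

set_option linter.unusedSectionVars false

section helpers

variable {G : Type*} [Group G] [Fintype G]

lemma schur_zero_s10 {U₁ U₂ : Type*} [AddCommGroup U₁] [Module ℂ U₁] [AddCommGroup U₂] [Module ℂ U₂]
    (σ₁ : Representation ℂ G U₁) (σ₂ : Representation ℂ G U₂)
    (h₁ : IsIrreducibleRep σ₁) (h₂ : IsIrreducibleRep σ₂) (hn : ¬ RepIso σ₁ σ₂)
    (T : U₁ →ₗ[ℂ] U₂) (hT : ∀ g v, T (σ₁ g v) = σ₂ g (T v)) : T = 0 := by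
  rcases h₁.2 (LinearMap.ker T) (by
    intro g v hv
    rw [LinearMap.mem_ker] at *
    rw [hT, hv, map_zero]) with hk | hk
  · rcases h₂.2 (LinearMap.range T) (by
      rintro g _ ⟨v, rfl⟩
      exact ⟨σ₁ g v, hT g v⟩) with hr | hr
    · exact LinearMap.range_eq_bot.1 hr
    · exact absurd ⟨LinearEquiv.ofBijective T ⟨LinearMap.ker_eq_bot.1 hk, LinearMap.range_eq_top.1 hr⟩,
        fun g v => hT g v⟩ hn
  · exact LinearMap.ker_eq_top.1 hk

lemma schur_scalar {U : Type*} [AddCommGroup U] [Module ℂ U] [FiniteDimensional ℂ U]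
    (σ : Representation ℂ G U) (h : IsIrreducibleRep σ)
    (T : U →ₗ[ℂ] U) (hT : ∀ g v, T (σ g v) = σ g (T v)) :
    ∃ c : ℂ, ∀ v, T v = c • v := by
  obtain ⟨v0, hv0⟩ := h.1
  have : Nontrivial U := ⟨v0, 0, hv0⟩
  obtain ⟨c, hc⟩ := Module.End.exists_eigenvalue T
  refine ⟨c, fun v => ?_⟩
  rcases h.2 (Module.End.eigenspace T c) (by
    intro g v hv
    rw [Module.End.mem_eigenspace_iff] at *
    rw [hT, hv, map_smul]) with hk | hk
  · exact absurd hk hc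
  · exact Module.End.mem_eigenspace_iff.1 (hk ▸ Submodule.mem_top)

/-- averaged operator -/
def avgOp {U₁ U₂ : Type*} [AddCommGroup U₁] [Module ℂ U₁] [AddCommGroup U₂] [Module ℂ U₂]
    (σ₁ : Representation ℂ G U₁) (σ₂ : Representation ℂ G U₂) (X : U₁ →ₗ[ℂ] U₂) : U₁ →ₗ[ℂ] U₂ :=
  ∑ g : G, (σ₂ g) ∘ₗ X ∘ₗ (σ₁ g⁻¹)

lemma avgOp_comm {U₁ U₂ : Type*} [AddCommGroup U₁] [Module ℂ U₁] [AddCommGroup U₂] [Module ℂ U₂]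
    (σ₁ : Representation ℂ G U₁) (σ₂ : Representation ℂ G U₂) (X : U₁ →ₗ[ℂ] U₂) (h : G) (v : U₁) :
    avgOp σ₁ σ₂ X (σ₁ h v) = σ₂ h (avgOp σ₁ σ₂ X v) := by
  simp only [avgOp, LinearMap.sum_apply, LinearMap.comp_apply, map_sum]
  rw [← Equiv.sum_comp (Equiv.mulLeft h)]
  refine Finset.sum_congr rfl fun g _ => ?_
  simp only [Equiv.coe_mulLeft, mul_inv_rev, map_mul, Module.End.mul_apply]
  rw [Representation.inv_self_apply]

variable {U : Type*} [NormedAddCommGroup U] [InnerProductSpace ℂ U] [FiniteDimensional ℂ U]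

/-- matrix coefficients -/
def mc (σ : Representation ℂ G U) (a b : Fin (Module.finrank ℂ U)) (g : G) : ℂ :=
  ⟪stdOrthonormalBasis ℂ U a, σ g (stdOrthonormalBasis ℂ U b)⟫_ℂ

lemma unit_inv {V : Type*} [NormedAddCommGroup V] [InnerProductSpace ℂ V]
    {σ : Representation ℂ G V} (hu : IsUnitaryRep σ) (g : G) (v w : V) :
    ⟪σ g v, w⟫_ℂ = ⟪v, σ g⁻¹ w⟫_ℂ := by
  rw [← hu g v (σ g⁻¹ w), ← Module.End.mul_apply (σ g) (σ g⁻¹), ← map_mul, mul_inv_cancel, map_one,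
    Module.End.one_apply]

lemma mc_conj {σ : Representation ℂ G U} (hu : IsUnitaryRep σ) (a b) (g : G) :
    starRingEnd ℂ (mc σ a b g) = mc σ b a g⁻¹ := by
  rw [mc, inner_conj_symm, unit_inv hu, mc]

lemma mc_mul (σ : Representation ℂ G U) (a b) (g h : G) :
    mc σ a b (g * h) = ∑ e, mc σ a e g * mc σ e b h := by
  have := (stdOrthonormalBasis ℂ U).sum_repr' (σ h (stdOrthonormalBasis ℂ U b))
  simp only [mc]
  rw [map_mul, Module.End.mul_apply]
  conv_lhs => rw [← this]
  simp only [map_sum, map_smul, inner_sum, inner_smul_right]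
  exact Finset.sum_congr rfl fun e _ => mul_comm _ _

lemma mc_orth_ne {U' : Type*} [NormedAddCommGroup U'] [InnerProductSpace ℂ U']
    [FiniteDimensional ℂ U'] {σ : Representation ℂ G U} {σ' : Representation ℂ G U'}
    (h : IsIrreducibleRep σ) (h' : IsIrreducibleRep σ') (hu' : IsUnitaryRep σ')
    (hn : ¬ RepIso σ' σ) (a b c d) :
    ∑ g : G, mc σ a b g * starRingEnd ℂ (mc σ' c d g) = 0 := by
  let X : U' →ₗ[ℂ] U := (innerₛₗ ℂ (stdOrthonormalBasis ℂ U' d)).smulRight (stdOrthonormalBasis ℂ U b)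
  have h0 := schur_zero_s10 σ' σ h' h hn (avgOp σ' σ X) (avgOp_comm σ' σ X)
  have h1 : ⟪stdOrthonormalBasis ℂ U a, avgOp σ' σ X (stdOrthonormalBasis ℂ U' c)⟫_ℂ = 0 := by
    rw [h0]; simp
  rw [← h1]
  simp only [avgOp, LinearMap.sum_apply, inner_sum, LinearMap.comp_apply]
  refine Finset.sum_congr rfl fun g _ => ?_
  rw [mc_conj hu']
  simp [X, mc, inner_smul_right, mul_comm]

lemma irr_pos {σ : Representation ℂ G U} (h : IsIrreducibleRep σ) : 0 < Module.finrank ℂ U := by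
  obtain ⟨v0, hv0⟩ := h.1
  have : Nontrivial U := ⟨v0, 0, hv0⟩
  exact Module.finrank_pos

lemma mc_orth {σ : Representation ℂ G U}
    (h : IsIrreducibleRep σ) (hu : IsUnitaryRep σ) (a b c d) :
    ∑ g : G, mc σ a b g * starRingEnd ℂ (mc σ c d g)
      = if a = c ∧ b = d then (Fintype.card G : ℂ) / Module.finrank ℂ U else 0 := by
  let X : U →ₗ[ℂ] U := (innerₛₗ ℂ (stdOrthonormalBasis ℂ U d)).smulRight (stdOrthonormalBasis ℂ U b)
  obtain ⟨s, hs⟩ := schur_scalar σ h (avgOp σ σ X) (avgOp_comm σ σ X)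
  have hpos : (Module.finrank ℂ U : ℂ) ≠ 0 := by exact_mod_cast (irr_pos h).ne'
  have htr : LinearMap.trace ℂ U X = if b = d then 1 else 0 := by
    rw [LinearMap.trace_eq_sum_inner _ (stdOrthonormalBasis ℂ U)]
    simp [X, inner_smul_right, OrthonormalBasis.inner_eq_ite, -ite_smul, eq_comm]
  have h2 : LinearMap.trace ℂ U (avgOp σ σ X) = Fintype.card G * if b = d then 1 else 0 := by
    rw [avgOp, map_sum]
    have : ∀ g : G, LinearMap.trace ℂ U (σ g ∘ₗ X ∘ₗ σ g⁻¹) = if b = d then 1 else 0 := by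
      intro g
      rw [← htr, LinearMap.trace_comp_comm', LinearMap.comp_assoc]
      congr 1
      ext v
      simp only [LinearMap.comp_apply]
      rw [Representation.inv_self_apply]
    simp [this]
  have h3 : avgOp σ σ X = s • LinearMap.id := by ext v; simp [hs]
  rw [h3, map_smul, LinearMap.trace_id, smul_eq_mul] at h2
  have h1 : ⟪stdOrthonormalBasis ℂ U a, avgOp σ σ X (stdOrthonormalBasis ℂ U c)⟫_ℂ
      = s * if a = c then 1 else 0 := by
    rw [hs, inner_smul_right, OrthonormalBasis.inner_eq_ite]
  have h4 : s = (Fintype.card G * if b = d then 1 else 0) / Module.finrank ℂ U := by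
    rw [← h2]; field_simp
  trans ⟪stdOrthonormalBasis ℂ U a, avgOp σ σ X (stdOrthonormalBasis ℂ U c)⟫_ℂ
  · simp only [avgOp, LinearMap.sum_apply, inner_sum, LinearMap.comp_apply]
    refine Finset.sum_congr rfl fun g _ => ?_
    rw [mc_conj hu]
    simp [X, mc, inner_smul_right, mul_comm]
  · rw [h1, h4]
    by_cases h5 : a = c <;> by_cases h6 : b = d <;> simp [h5, h6]

lemma char_eq (σ : Representation ℂ G U) (g : G) : repChar σ g = ∑ a, mc σ a a g := by
  rw [repChar, LinearMap.trace_eq_sum_inner _ (stdOrthonormalBasis ℂ U)]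
  rfl

variable {V : Type*} [NormedAddCommGroup V] [InnerProductSpace ℂ V]

/-- matrix units -/
def mu (σ : Representation ℂ G U) (τ : Representation ℂ G V)
    (a b : Fin (Module.finrank ℂ U)) : V →ₗ[ℂ] V :=
  ((Module.finrank ℂ U : ℂ) / Fintype.card G) • ∑ g : G, starRingEnd ℂ (mc σ a b g) • τ g

lemma mu_adj {σ : Representation ℂ G U} {τ : Representation ℂ G V} (hu : IsUnitaryRep σ)
    (ht : IsUnitaryRep τ) (a b) (v w : V) : ⟪mu σ τ a b v, w⟫_ℂ = ⟪v, mu σ τ b a w⟫_ℂ := by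
  simp only [mu, LinearMap.smul_apply, LinearMap.sum_apply, inner_smul_left, inner_smul_right,
    sum_inner, inner_sum, map_div₀, map_natCast, Complex.conj_conj]
  congr 1
  rw [← Equiv.sum_comp (Equiv.inv G)]
  refine Finset.sum_congr rfl fun g _ => ?_
  rw [Equiv.inv_apply, unit_inv ht, inv_inv, mc_conj hu]

lemma mu_mul {σ : Representation ℂ G U} {τ : Representation ℂ G V} (hu : IsUnitaryRep σ)
    (hi : IsIrreducibleRep σ) (a b c d) (v : V) :
    mu σ τ a b (mu σ τ c d v) = if b = c then mu σ τ a d v else 0 := by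
  have hpos : (Module.finrank ℂ U : ℂ) ≠ 0 := by exact_mod_cast (irr_pos hi).ne'
  have hG : (Fintype.card G : ℂ) ≠ 0 := by exact_mod_cast Fintype.card_ne_zero
  have key : ∀ x : G, ∑ g : G, starRingEnd ℂ (mc σ a b g) * starRingEnd ℂ (mc σ c d (g⁻¹ * x))
      = if b = c then (Fintype.card G : ℂ) / Module.finrank ℂ U * starRingEnd ℂ (mc σ a d x) else 0 := by
    intro x
    have : ∀ g : G, starRingEnd ℂ (mc σ a b g) * starRingEnd ℂ (mc σ c d (g⁻¹ * x))
        = ∑ e, (mc σ e c g * starRingEnd ℂ (mc σ a b g)) * starRingEnd ℂ (mc σ e d x) := by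
      intro g
      rw [mc_mul, map_sum, Finset.mul_sum]
      refine Finset.sum_congr rfl fun e _ => ?_
      rw [map_mul, mc_conj hu c e, inv_inv]; ring
    simp only [this]
    rw [Finset.sum_comm]
    simp only [← Finset.sum_mul, mc_orth hi hu]
    by_cases hbc : b = c
    · subst hbc; simp
    · simp [hbc, Ne.symm hbc]
  have h1 : mu σ τ a b (mu σ τ c d v) = ((Module.finrank ℂ U : ℂ) / Fintype.card G) •
      ((Module.finrank ℂ U : ℂ) / Fintype.card G) •
      ∑ x : G, (∑ g : G, starRingEnd ℂ (mc σ a b g) * starRingEnd ℂ (mc σ c d (g⁻¹ * x))) • τ x v := by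
    simp only [mu, LinearMap.smul_apply, LinearMap.sum_apply]
    simp only [map_smul (τ _), map_sum (τ _)]
    simp only [smul_comm _ ((Module.finrank ℂ U : ℂ) / Fintype.card G), ← Finset.smul_sum]
    congr 2
    simp only [Finset.sum_smul]
    rw [Finset.sum_comm]
    refine Finset.sum_congr rfl fun g _ => ?_
    rw [Finset.smul_sum, ← Equiv.sum_comp (Equiv.mulLeft g) (fun x => _ • τ x v)]
    refine Finset.sum_congr rfl fun x _ => ?_
    simp [smul_smul, map_mul]
  rw [h1]
  simp only [key]
  by_cases hbc : b = c
  · simp only [hbc, if_true, mu, LinearMap.smul_apply, LinearMap.sum_apply]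
    congr 1
    simp only [mul_smul, ← Finset.smul_sum]
    rw [smul_smul]
    have : (Module.finrank ℂ U : ℂ) / Fintype.card G * (Fintype.card G / Module.finrank ℂ U) = 1 := by
      field_simp
    rw [this, one_smul]
  · simp [hbc]

lemma isoProj_eq_s10 (σ : Representation ℂ G U) (τ : Representation ℂ G V) (v : V) :
    isoProj (Module.finrank ℂ U) (repChar σ) τ v = ∑ a, mu σ τ a a v := by
  simp only [isoProj, mu, LinearMap.smul_apply, LinearMap.sum_apply, ← Finset.smul_sum, char_eq,
    map_sum, Finset.sum_smul]
  rw [Finset.sum_comm]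

lemma mu_bound {σ : Representation ℂ G U} {τ : Representation ℂ G V} (hu : IsUnitaryRep σ)
    (hi : IsIrreducibleRep σ) (ht : IsUnitaryRep τ) (b : V) (hb : ‖b‖ = 1) :
    ∑ x, ∑ y, ‖⟪b, mu σ τ x y b⟫_ℂ‖ ^ 2
      ≤ ‖isoProj (Module.finrank ℂ U) (repChar σ) τ b‖ ^ 2 := by
  have hin : ∀ x y, ⟪mu σ τ x y b, mu σ τ x y b⟫_ℂ = ⟪b, mu σ τ y y b⟫_ℂ := by
    intro x y
    rw [mu_adj hu ht, mu_mul hu hi, if_pos rfl]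
  have hn : ∀ x y, ‖mu σ τ x y b‖ ^ 2 = ‖mu σ τ y y b‖ ^ 2 := by
    intro x y
    have := (hin x y).trans (hin y y).symm
    rw [inner_self_eq_norm_sq_to_K, inner_self_eq_norm_sq_to_K] at this
    exact_mod_cast this
  set P := isoProj (Module.finrank ℂ U) (repChar σ) τ b with hP
  have hPP : ⟪P, P⟫_ℂ = ∑ x, ⟪mu σ τ x x b, mu σ τ x x b⟫_ℂ := by
    rw [hP, isoProj_eq_s10]
    simp only [sum_inner, inner_sum]
    refine Finset.sum_congr rfl fun x _ => ?_
    rw [Finset.sum_eq_single x]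
    · intro y _ hy
      rw [mu_adj hu ht, mu_mul hu hi, if_neg hy, inner_zero_right]
    · simp
  have hS : ‖P‖ ^ 2 = ∑ x, ‖mu σ τ x x b‖ ^ 2 := by
    simp only [inner_self_eq_norm_sq_to_K] at hPP
    exact_mod_cast hPP
  have hbP : ⟪b, P⟫_ℂ = ⟪P, P⟫_ℂ := by
    rw [hPP]
    simp only [hin]
    rw [hP, isoProj_eq_s10, inner_sum]
  have hle : ‖P‖ ≤ 1 := by
    have h1 := norm_inner_le_norm (𝕜 := ℂ) b P
    rw [hbP, inner_self_eq_norm_sq_to_K, hb, one_mul] at h1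
    have h2 : ‖P‖ ^ 2 ≤ ‖P‖ := by simpa using h1
    by_contra hc
    push Not at hc
    nlinarith
  calc ∑ x, ∑ y, ‖⟪b, mu σ τ x y b⟫_ℂ‖ ^ 2
      ≤ ∑ x, ∑ y, ‖mu σ τ x x b‖ ^ 2 * ‖mu σ τ y y b‖ ^ 2 := by
        refine Finset.sum_le_sum fun x _ => Finset.sum_le_sum fun y _ => ?_
        have h1 : ⟪b, mu σ τ x y b⟫_ℂ = ⟪mu σ τ x x b, mu σ τ x y b⟫_ℂ := by
          rw [mu_adj hu ht, mu_mul hu hi, if_pos rfl]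
        rw [h1, ← hn x y, ← mul_pow]
        gcongr
        exact norm_inner_le_norm _ _
    _ = ‖P‖ ^ 2 * ‖P‖ ^ 2 := by rw [hS, Finset.sum_mul_sum]
    _ ≤ ‖P‖ ^ 2 * 1 := by
        gcongr
        exact pow_le_one₀ (norm_nonneg _) hle
    _ = ‖P‖ ^ 2 := mul_one _


/-- Every nonzero invariant subspace contains a minimal one. -/
lemma exists_min_inv [FiniteDimensional ℂ V] (τ : Representation ℂ G V) (S : Submodule ℂ V)
    (hS : ∀ g v, v ∈ S → τ g v ∈ S) (hne : S ≠ ⊥) :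
    ∃ T : Submodule ℂ V, T ≤ S ∧ T ≠ ⊥ ∧ (∀ g v, v ∈ T → τ g v ∈ T) ∧
      ∀ R : Submodule ℂ V, (∀ g v, v ∈ R → τ g v ∈ R) → R ≤ T → R = ⊥ ∨ R = T := by
  obtain ⟨T, ⟨h1, h2, h3⟩, hmin⟩ := (wellFounded_lt (α := Submodule ℂ V)).has_min
    {T | T ≤ S ∧ T ≠ ⊥ ∧ (∀ g v, v ∈ T → τ g v ∈ T)} ⟨S, le_rfl, hne, hS⟩
  refine ⟨T, h1, h2, h3, fun R hR hRT => ?_⟩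
  by_contra hc
  push Not at hc
  exact hmin R ⟨hRT.trans h1, hc.1, hR⟩ (lt_of_le_of_ne hRT hc.2)

variable {J : Type*} [Fintype J]
    {W : J → Type*} [∀ j, NormedAddCommGroup (W j)] [∀ j, InnerProductSpace ℂ (W j)]
    [∀ j, FiniteDimensional ℂ (W j)]
    {σ : ∀ j, Representation ℂ G (W j)}

/-- the span of all matrix coefficients -/
def mcSpan (σ : ∀ j, Representation ℂ G (W j)) : Submodule ℂ (G → ℂ) :=
  Submodule.span ℂ (Set.range fun x : (Σ j, Fin (Module.finrank ℂ (W j)) ×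
    Fin (Module.finrank ℂ (W j))) => mc (σ x.1) x.2.1 x.2.2)

lemma coef_mem (j : J) (φ : W j →ₗ[ℂ] ℂ) (w : W j) :
    (fun g => φ (σ j g w)) ∈ mcSpan σ := by
  have h : (fun g => φ (σ j g w)) = ∑ b, ∑ a,
      (φ (stdOrthonormalBasis ℂ (W j) a) * ⟪stdOrthonormalBasis ℂ (W j) b, w⟫_ℂ) • mc (σ j) a b := by
    funext g
    have hw := (stdOrthonormalBasis ℂ (W j)).sum_repr' w
    conv_lhs => rw [← hw]
    simp only [map_sum, map_smul, Finset.sum_apply, Pi.smul_apply, smul_eq_mul]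
    refine Finset.sum_congr rfl fun b _ => ?_
    have hb := (stdOrthonormalBasis ℂ (W j)).sum_repr' (σ j g (stdOrthonormalBasis ℂ (W j) b))
    conv_lhs => rw [← hb]
    simp only [map_sum, map_smul, smul_eq_mul, Finset.mul_sum]
    refine Finset.sum_congr rfl fun a _ => ?_
    rw [mc]; ring
  rw [h]
  refine Submodule.sum_mem _ fun b _ => Submodule.sum_mem _ fun a _ => Submodule.smul_mem _ _ ?_
  exact Submodule.subset_span ⟨⟨j, a, b⟩, rfl⟩

lemma all_mem [FiniteDimensional ℂ V] (hfam : IsCompleteFamily W σ) (τ : Representation ℂ G V)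
    (ht : IsUnitaryRep τ) (u w : V) : (fun g => ⟪u, τ g w⟫_ℂ) ∈ mcSpan σ := by
  let S : Submodule ℂ V :=
    { carrier := {w | ∀ φ : V →ₗ[ℂ] ℂ, (fun g => φ (τ g w)) ∈ mcSpan σ}
      zero_mem' := by
        intro φ
        simp only [map_zero]
        exact Submodule.zero_mem _
      add_mem' := by
        intro x y hx hy φ
        simp only [map_add]
        exact Submodule.add_mem _ (hx φ) (hy φ)
      smul_mem' := by
        intro c x hx φ
        simp only [map_smul]
        exact Submodule.smul_mem _ c (hx φ) }
  suffices hS : S = ⊤ by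
    have : w ∈ S := hS ▸ Submodule.mem_top
    exact this (innerₛₗ ℂ u)
  by_contra hne
  have hSorth : Sᗮ ≠ ⊥ := fun h => hne (Submodule.orthogonal_eq_bot_iff.1 h)
  have hmc : ∀ (h : G) (f : G → ℂ), f ∈ mcSpan σ → (fun g => f (g * h)) ∈ mcSpan σ := by
    intro h f hf
    induction hf using Submodule.span_induction with
    | mem f hf =>
      obtain ⟨⟨j, a, b⟩, rfl⟩ := hf
      have := coef_mem (σ := σ) j (innerₛₗ ℂ (stdOrthonormalBasis ℂ (W j) a))
        (σ j h (stdOrthonormalBasis ℂ (W j) b))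
      simpa [mc] using this
    | zero => exact Submodule.zero_mem _
    | add x y _ _ hx hy => exact Submodule.add_mem _ hx hy
    | smul c x _ hx => exact Submodule.smul_mem _ c hx
  have hSinv : ∀ g v, v ∈ S → τ g v ∈ S := by
    intro h v hv φ
    have := hmc h _ (hv φ)
    simpa using this
  have hOinv : ∀ g v, v ∈ Sᗮ → τ g v ∈ Sᗮ := by
    intro g v hv
    rw [Submodule.mem_orthogonal'] at *
    intro x hx
    rw [unit_inv ht]
    exact hv _ (hSinv _ _ hx)
  obtain ⟨T, hTS, hT0, hTinv, hTmin⟩ := exists_min_inv τ Sᗮ hOinv hSorth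
  suffices hle : T ≤ S by
    apply hT0
    rw [eq_bot_iff, ← Submodule.inf_orthogonal_eq_bot S]
    exact le_inf hle hTS
  let e : T ≃ₗ[ℂ] (Fin (Module.finrank ℂ T) → ℂ) := (Module.finBasis ℂ T).equivFun
  let κ : Representation ℂ G (Fin (Module.finrank ℂ T) → ℂ) :=
    { toFun := fun g => e.toLinearMap ∘ₗ ((τ g).restrict (hTinv g)) ∘ₗ e.symm.toLinearMap
      map_one' := by
        ext1 i
        ext1
        simp [LinearMap.restrict_apply]
      map_mul' := by
        intro g h
        apply LinearMap.ext
        intro x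
        simp [LinearMap.restrict_apply] }
  have hκ : ∀ g (x : T), κ g (e x) = e ⟨τ g x, hTinv g x x.2⟩ := by
    intro g x
    simp [κ, LinearMap.restrict_apply]
  have hirr : IsIrreducibleRep κ := by
    constructor
    · obtain ⟨v, hv, hv0⟩ := Submodule.exists_mem_ne_zero_of_ne_bot hT0
      refine ⟨e ⟨v, hv⟩, ?_⟩
      simpa using hv0
    · intro R hR
      let R' : Submodule ℂ V := (R.comap e.toLinearMap).map T.subtype
      have hR' : ∀ x : T, (x : V) ∈ R' ↔ e x ∈ R := by
        intro x
        simp [R']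
      have hR'T : R' ≤ T := Submodule.map_subtype_le _ _
      rcases hTmin R' (by
        intro g v hv
        have h1 := hR'T hv
        have h2 := (hR' ⟨v, h1⟩).1 hv
        have h3 := hR g _ h2
        rw [hκ] at h3
        exact (hR' ⟨τ g v, hTinv g v h1⟩).2 h3) hR'T with h | h
      · left
        rw [eq_bot_iff]
        intro y hy
        have h1 := (hR' (e.symm y)).2 (by simpa using hy)
        rw [h, Submodule.mem_bot] at h1
        have h2 : e.symm y = 0 := Subtype.ext h1
        simpa using h2
      · right
        rw [eq_top_iff]
        intro y _
        have h1 := (hR' (e.symm y)).1 (by rw [h]; exact (e.symm y).2)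
        simpa using h1
  obtain ⟨j, E, hE⟩ := hfam.2.2.2 _ κ hirr
  intro v hv φ
  let F : T ≃ₗ[ℂ] W j := e.trans E
  have h1 := coef_mem (σ := σ) j (φ ∘ₗ T.subtype ∘ₗ F.symm.toLinearMap) (F ⟨v, hv⟩)
  have h2 : ∀ g, σ j g (F ⟨v, hv⟩) = F ⟨τ g v, hTinv g v hv⟩ := by
    intro g
    simp only [F, LinearEquiv.trans_apply]
    rw [← hE, hκ]
  simp only [h2] at h1
  simpa using h1

lemma parseval (hfam : IsCompleteFamily W σ) (f : G → ℂ) (hf : f ∈ mcSpan σ) :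
    (Fintype.card G : ℝ)⁻¹ * ∑ g, ‖f g‖ ^ 2 = ∑ j, (∑ x, ∑ y,
      ‖(Module.finrank ℂ (W j) : ℂ) / Fintype.card G *
        ∑ g, starRingEnd ℂ (mc (σ j) x y g) * f g‖ ^ 2) / Module.finrank ℂ (W j) := by
  classical
  have hG : (Fintype.card G : ℂ) ≠ 0 := by exact_mod_cast Fintype.card_ne_zero
  have hd : ∀ j, (Module.finrank ℂ (W j) : ℂ) ≠ 0 := fun j => by
    exact_mod_cast (irr_pos (hfam.2.1 j)).ne'
  obtain ⟨c, hc⟩ := (Submodule.mem_span_range_iff_exists_fun ℂ).1 hf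
  have horth : ∀ x y : (Σ j, Fin (Module.finrank ℂ (W j)) × Fin (Module.finrank ℂ (W j))),
      ∑ g, mc (σ x.1) x.2.1 x.2.2 g * starRingEnd ℂ (mc (σ y.1) y.2.1 y.2.2 g)
        = if x = y then (Fintype.card G : ℂ) / Module.finrank ℂ (W y.1) else 0 := by
    rintro ⟨j, a, b⟩ ⟨j', a', b'⟩
    by_cases hj : j = j'
    · subst hj
      rw [mc_orth (hfam.2.1 j) (hfam.1 j)]
      simp
    · rw [mc_orth_ne (hfam.2.1 j) (hfam.2.1 j') (hfam.1 j') (hfam.2.2.1 j' j (Ne.symm hj)), if_neg]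
      intro h
      exact hj (congrArg Sigma.fst h)
  have hcoef : ∀ y : (Σ j, Fin (Module.finrank ℂ (W j)) × Fin (Module.finrank ℂ (W j))),
      ∑ g, starRingEnd ℂ (mc (σ y.1) y.2.1 y.2.2 g) * f g
        = (Fintype.card G : ℂ) / Module.finrank ℂ (W y.1) * c y := by
    intro y
    rw [← hc]
    simp only [Finset.sum_apply, Pi.smul_apply, smul_eq_mul, Finset.mul_sum]
    rw [Finset.sum_comm]
    have : ∀ x, ∑ g, starRingEnd ℂ (mc (σ y.1) y.2.1 y.2.2 g) *
        (c x * mc (σ x.1) x.2.1 x.2.2 g) = c x *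
        if x = y then (Fintype.card G : ℂ) / Module.finrank ℂ (W y.1) else 0 := by
      intro x
      rw [← horth, Finset.mul_sum]
      exact Finset.sum_congr rfl fun g _ => by ring
    simp only [this]
    simp [mul_comm]
  have hcoef' : ∀ j a b, (Module.finrank ℂ (W j) : ℂ) / Fintype.card G *
        ∑ g, starRingEnd ℂ (mc (σ j) a b g) * f g = c ⟨j, a, b⟩ := by
    intro j a b
    rw [hcoef ⟨j, a, b⟩]
    have := hd j
    field_simp
  simp only [hcoef']
  have hmain : ∑ g, starRingEnd ℂ (f g) * f g = ∑ y : (Σ j, Fin (Module.finrank ℂ (W j)) ×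
      Fin (Module.finrank ℂ (W j))), starRingEnd ℂ (c y) *
        ((Fintype.card G : ℂ) / Module.finrank ℂ (W y.1) * c y) := by
    simp only [← hcoef, Finset.mul_sum]
    rw [Finset.sum_comm]
    refine Finset.sum_congr rfl fun g _ => ?_
    have : starRingEnd ℂ (f g) = ∑ y : (Σ j, Fin (Module.finrank ℂ (W j)) ×
      Fin (Module.finrank ℂ (W j))), starRingEnd ℂ (c y) *
        starRingEnd ℂ (mc (σ y.1) y.2.1 y.2.2 g) := by
      rw [← hc]
      simp
    rw [this, Finset.sum_mul]
    exact Finset.sum_congr rfl fun y _ => by ring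
  have hmainR : ∑ g, ‖f g‖ ^ 2 = ∑ y : (Σ j, Fin (Module.finrank ℂ (W j)) ×
      Fin (Module.finrank ℂ (W j))), (Fintype.card G : ℝ) / Module.finrank ℂ (W y.1) * ‖c y‖ ^ 2 := by
    have h1 : ∀ z : ℂ, starRingEnd ℂ z * z = ((‖z‖ ^ 2 : ℝ) : ℂ) := by
      intro z
      rw [Complex.conj_mul']; push_cast; rfl
    have h2 : ∀ y : (Σ j, Fin (Module.finrank ℂ (W j)) ×
      Fin (Module.finrank ℂ (W j))), starRingEnd ℂ (c y) *
        ((Fintype.card G : ℂ) / Module.finrank ℂ (W y.1) * c y)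
        = (((Fintype.card G : ℝ) / Module.finrank ℂ (W y.1) * ‖c y‖ ^ 2 : ℝ) : ℂ) := by
      intro y
      rw [mul_left_comm, h1]; push_cast; rfl
    simp only [h1, h2] at hmain
    exact_mod_cast hmain
  have hGR : (Fintype.card G : ℝ) ≠ 0 := by exact_mod_cast Fintype.card_ne_zero
  rw [hmainR, Finset.mul_sum, Fintype.sum_sigma]
  refine Finset.sum_congr rfl fun j _ => ?_
  rw [Fintype.sum_prod_type, Finset.sum_div]
  refine Finset.sum_congr rfl fun a _ => ?_
  rw [Finset.sum_div]
  refine Finset.sum_congr rfl fun b _ => ?_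
  field_simp

lemma main_bound [FiniteDimensional ℂ V] (hfam : IsCompleteFamily W σ) (τ : Representation ℂ G V)
    (ht : IsUnitaryRep τ) (b : V) (hb : ‖b‖ = 1) :
    (Fintype.card G : ℝ)⁻¹ * ∑ g, ‖⟪b, τ g b⟫_ℂ‖ ^ 2 ≤
      ∑ j, ‖isoProj (Module.finrank ℂ (W j)) (repChar (σ j)) τ b‖ ^ 2
        / Module.finrank ℂ (W j) := by
  rw [parseval hfam _ (all_mem hfam τ ht b b)]
  refine Finset.sum_le_sum fun j _ => ?_
  gcongr
  refine le_trans (le_of_eq ?_) (mu_bound (hfam.1 j) (hfam.2.1 j) ht b hb)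
  refine Finset.sum_congr rfl fun x _ => Finset.sum_congr rfl fun y _ => ?_
  simp only [mu, LinearMap.smul_apply, LinearMap.sum_apply, inner_smul_right, inner_sum]

lemma mc_norm_le {σ : Representation ℂ G U} (hu : IsUnitaryRep σ) (a b) (g : G) :
    ‖mc σ a b g‖ ≤ 1 := by
  have h : ‖σ g (stdOrthonormalBasis ℂ U b)‖ = 1 := by
    have := hu g (stdOrthonormalBasis ℂ U b) (stdOrthonormalBasis ℂ U b)
    rw [inner_self_eq_norm_sq_to_K, inner_self_eq_norm_sq_to_K, OrthonormalBasis.norm_eq_one] at this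
    have h2 : ‖σ g (stdOrthonormalBasis ℂ U b)‖ ^ 2 = 1 := by
      have h3 : ((‖σ g (stdOrthonormalBasis ℂ U b)‖ ^ 2 : ℝ) : ℂ) = ((1 : ℝ) : ℂ) := by
        push_cast; simpa using this
      exact_mod_cast h3
    exact (pow_eq_one_iff_of_nonneg (norm_nonneg _) two_ne_zero).1 h2
  refine (norm_inner_le_norm _ _).trans ?_
  rw [h, OrthonormalBasis.norm_eq_one, one_mul]

lemma char_norm_le {σ : Representation ℂ G U} (hu : IsUnitaryRep σ) (g : G) :
    ‖repChar σ g‖ ≤ Module.finrank ℂ U := by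
  rw [char_eq]
  refine (norm_sum_le_of_le _ (fun a _ => mc_norm_le hu a a g)).trans ?_
  simp

lemma char_conj {σ : Representation ℂ G U} (hu : IsUnitaryRep σ) (g : G) :
    starRingEnd ℂ (repChar σ g) = repChar σ g⁻¹ := by
  rw [char_eq, char_eq, map_sum]
  exact Finset.sum_congr rfl fun a _ => mc_conj hu a a g

/-- the restriction of a representation of the power along `g ↦ g^I` -/
def resI {k : ℕ} (ρ : Representation ℂ (Fin k → G) V) (I : Finset (Fin k)) :
    Representation ℂ G V :=
  ρ.comp
    { toFun := fun g => onI g I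
      map_one' := by funext i; simp [onI]
      map_mul' := by
        intro g h
        funext i
        by_cases hi : i ∈ I <;> simp [onI, hi] }

end helpers

/-- For a unitary representation `ρ` of `G^k`, a unit vector `b`, and `j ∈ J`,
`Σ_{I₁,I₂⊆[k]} (d_j/|G|) Σ_g conj(χ_j(g)) ⟪b,ρ(g^{I₁})b⟫ conj(⟪b,ρ(g^{I₂})b⟫)
  ≤ 2^k d_j² Σ_{I⊆[k]} Σ_{j'} ‖Π_{j'}^I b‖²/d_{j'}`. -/
theorem stmt10 {G : Type*} [Group G] [Fintype G]
    {J : Type*} [Fintype J]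
    (W : J → Type*) [∀ j, NormedAddCommGroup (W j)] [∀ j, InnerProductSpace ℂ (W j)]
    [∀ j, FiniteDimensional ℂ (W j)]
    (σ : ∀ j, Representation ℂ G (W j)) (hfam : IsCompleteFamily W σ)
    {k : ℕ} (hk : 1 ≤ k)
    {V : Type*} [NormedAddCommGroup V] [InnerProductSpace ℂ V] [FiniteDimensional ℂ V]
    (ρ : Representation ℂ (Fin k → G) V) (hρu : IsUnitaryRep ρ)
    (b : V) (hb : ‖b‖ = 1) (j : J) :
    ∑ I₁ : Finset (Fin k), ∑ I₂ : Finset (Fin k),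
        (Module.finrank ℂ (W j) : ℂ) / (Fintype.card G : ℂ) *
          ∑ g : G, starRingEnd ℂ (repChar (σ j) g) *
            (⟪b, ρ (onI g I₁) b⟫_ℂ * starRingEnd ℂ ⟪b, ρ (onI g I₂) b⟫_ℂ)
      ≤ (((2 : ℝ) ^ k * (Module.finrank ℂ (W j) : ℝ) ^ 2 *
          ∑ I : Finset (Fin k), ∑ j',
            ‖isoProjI ρ (Module.finrank ℂ (W j')) (repChar (σ j')) I b‖ ^ 2
              / (Module.finrank ℂ (W j') : ℝ) : ℝ) : ℂ) := by
  have hunit : ∀ I, IsUnitaryRep (resI ρ I) := fun I g v w => hρu (onI g I) v w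
  set F : G → ℂ := fun g => ∑ I : Finset (Fin k), ⟪b, ρ (onI g I) b⟫_ℂ with hF
  have hFinv : ∀ g, F g⁻¹ = starRingEnd ℂ (F g) := by
    intro g
    simp only [hF, map_sum]
    refine Finset.sum_congr rfl fun I _ => ?_
    rw [inner_conj_symm]
    exact (unit_inv (hunit I) g b b).symm
  have hL : ∑ I₁ : Finset (Fin k), ∑ I₂ : Finset (Fin k),
        (Module.finrank ℂ (W j) : ℂ) / (Fintype.card G : ℂ) *
          ∑ g : G, starRingEnd ℂ (repChar (σ j) g) *
            (⟪b, ρ (onI g I₁) b⟫_ℂ * starRingEnd ℂ ⟪b, ρ (onI g I₂) b⟫_ℂ)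
      = (Module.finrank ℂ (W j) : ℂ) / (Fintype.card G : ℂ) *
          ∑ g : G, starRingEnd ℂ (repChar (σ j) g) * ((‖F g‖ ^ 2 : ℝ) : ℂ) := by
    have h1 : ∀ g, ((‖F g‖ ^ 2 : ℝ) : ℂ) = ∑ I₁ : Finset (Fin k), ∑ I₂ : Finset (Fin k),
        ⟪b, ρ (onI g I₁) b⟫_ℂ * starRingEnd ℂ ⟪b, ρ (onI g I₂) b⟫_ℂ := by
      intro g
      rw [Complex.ofReal_pow, ← Complex.mul_conj', hF, map_sum, Finset.sum_mul_sum]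
    simp only [h1, ← Finset.mul_sum]
    congr 1
    simp only [Finset.mul_sum]
    rw [Finset.sum_comm]
    conv_rhs => rw [Finset.sum_comm]
    conv_lhs => rw [Finset.sum_comm]
    refine Finset.sum_congr rfl fun I₁ _ => ?_
    rw [Finset.sum_comm]
  rw [hL]
  set Z : ℂ := (Module.finrank ℂ (W j) : ℂ) / (Fintype.card G : ℂ) *
          ∑ g : G, starRingEnd ℂ (repChar (σ j) g) * ((‖F g‖ ^ 2 : ℝ) : ℂ) with hZ
  have hreal : starRingEnd ℂ Z = Z := by
    simp only [hZ, map_mul, map_div₀, map_natCast, map_sum, Complex.conj_ofReal]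
    congr 1
    rw [← Equiv.sum_comp (Equiv.inv G)]
    refine Finset.sum_congr rfl fun g _ => ?_
    rw [Equiv.inv_apply, hFinv, ← char_conj (hfam.1 j), Complex.conj_conj, RCLike.norm_conj]
  have hGpos : (0 : ℝ) < Fintype.card G := by exact_mod_cast Fintype.card_pos
  have hFb : ∀ g, ‖F g‖ ^ 2 ≤ (2 : ℝ) ^ k * ∑ I, ‖⟪b, ρ (onI g I) b⟫_ℂ‖ ^ 2 := by
    intro g
    have h1 : ‖F g‖ ≤ ∑ I, ‖⟪b, ρ (onI g I) b⟫_ℂ‖ := norm_sum_le _ _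
    have h2 := sq_sum_le_card_mul_sum_sq (s := (Finset.univ : Finset (Finset (Fin k))))
      (f := fun I => ‖⟪b, ρ (onI g I) b⟫_ℂ‖)
    have h3 : ‖F g‖ ^ 2 ≤ (∑ I, ‖⟪b, ρ (onI g I) b⟫_ℂ‖) ^ 2 := by gcongr
    simpa using h3.trans h2
  have hbound : ‖Z‖ ≤ (2 : ℝ) ^ k * (Module.finrank ℂ (W j) : ℝ) ^ 2 *
          ∑ I : Finset (Fin k), ∑ j',
            ‖isoProjI ρ (Module.finrank ℂ (W j')) (repChar (σ j')) I b‖ ^ 2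
              / (Module.finrank ℂ (W j') : ℝ) := by
    calc ‖Z‖ ≤ (Module.finrank ℂ (W j) : ℝ) / Fintype.card G * ∑ g : G,
          (Module.finrank ℂ (W j) : ℝ) * ((2 : ℝ) ^ k * ∑ I, ‖⟪b, ρ (onI g I) b⟫_ℂ‖ ^ 2) := by
          rw [hZ, norm_mul, norm_div, Complex.norm_natCast, Complex.norm_natCast]
          gcongr
          refine norm_sum_le_of_le _ fun g _ => ?_
          rw [norm_mul, RCLike.norm_conj, Complex.norm_real, Real.norm_of_nonneg (by positivity)]
          exact mul_le_mul (char_norm_le (hfam.1 j) g) (hFb g) (by positivity) (by positivity)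
      _ = (2 : ℝ) ^ k * (Module.finrank ℂ (W j) : ℝ) ^ 2 * ∑ I : Finset (Fin k),
          ((Fintype.card G : ℝ)⁻¹ * ∑ g, ‖⟪b, resI ρ I g b⟫_ℂ‖ ^ 2) := by
          rw [← Finset.mul_sum, ← Finset.mul_sum, ← Finset.mul_sum, Finset.sum_comm]
          change _ = (2 : ℝ) ^ k * (Module.finrank ℂ (W j) : ℝ) ^ 2 * ((Fintype.card G : ℝ)⁻¹ *
            ∑ I : Finset (Fin k), ∑ g, ‖⟪b, ρ (onI g I) b⟫_ℂ‖ ^ 2)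
          ring
      _ ≤ _ := by
          gcongr with I
          exact main_bound hfam (resI ρ I) (hunit I) b hb
  have hZr : ((Z.re : ℝ) : ℂ) = Z := Complex.conj_eq_iff_re.1 hreal
  rw [← hZr]
  exact Complex.real_le_real.2 (((le_abs_self _).trans (Complex.abs_re_le_norm Z)).trans hbound)
end
end
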